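/- ∫₀^∞ I₀(2t)·I₀(t)·[K₀(t)]³·t dt = 3·∫₀^∞ K₀(2t)·[I₀(t)]²·[K₀(t)]²·t dt, and both quantities admit the closed forms ∫₀^∞ I₀(2t)·I₀(t)·[K₀(t)]³·t dt = (3π/2^{20/3})·(Γ(1/3)/√π)⁶ and ∫₀^∞ K₀(2t)·[I₀(t)]²·[K₀(t)]²·t dt = (π/2^{20/3})·(Γ(1/3)/√π)⁶. -/

import Mathlib

open Real MeasureTheory Set

/-- Modified Bessel function `I₀(t) = (1/π)∫₀^π exp(t cos θ) dθ`. -/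
noncomputable def I0 (t : ℝ) : ℝ := (1 / π) * ∫ θ in (0:ℝ)..π, exp (t * cos θ)

/-- Modified Bessel function `K₀(t) = ∫₀^∞ exp(−t cosh u) du`. -/
noncomputable def K0 (t : ℝ) : ℝ := ∫ u in Ioi (0:ℝ), exp (-(t * Real.cosh u))

/-- Rising factorial `(a)ₙ = a(a+1)⋯(a+n−1)`. -/
noncomputable def ris (a : ℝ) (n : ℕ) : ℝ := ∏ k ∈ Finset.range n, (a + k)

/-- Generalized hypergeometric series `ₚF_q(a; b | x)`. -/
noncomputable def pFq (a b : List ℝ) (x : ℝ) : ℝ :=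
  ∑' n : ℕ, ((a.map fun p => ris p n).prod / (b.map fun q => ris q n).prod) * x ^ n
    / (n.factorial : ℝ)


open scoped ENNReal

section helpers

lemma subst1 {φ φ' : ℝ → ℝ} {s t : Set ℝ} (hs : MeasurableSet s)
    (hd : ∀ x ∈ s, HasDerivAt φ (φ' x) x) (hb : BijOn φ s t) (f : ℝ → ℝ≥0∞) :
    ∫⁻ y in t, f y = ∫⁻ x in s, ENNReal.ofReal |φ' x| * f (φ x) := by
  rw [← hb.image_eq]
  exact lintegral_image_eq_lintegral_abs_deriv_mul hs
    (fun x hx => (hd x hx).hasDerivWithinAt) hb.injOn f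

lemma bij_of_inv {φ ψ : ℝ → ℝ} {s t : Set ℝ} (h1 : ∀ x ∈ s, φ x ∈ t) (h2 : ∀ y ∈ t, ψ y ∈ s)
    (h3 : ∀ x ∈ s, ψ (φ x) = x) (h4 : ∀ y ∈ t, φ (ψ y) = y) : BijOn φ s t :=
  InvOn.bijOn ⟨h3, h4⟩ h1 h2

lemma cmul {α : Type*} [MeasurableSpace α] {μ : Measure α} (c : ℝ) (hc : 0 ≤ c) (f : α → ℝ) :
    ENNReal.ofReal c * ∫⁻ x, ENNReal.ofReal (f x) ∂μ = ∫⁻ x, ENNReal.ofReal (c * f x) ∂μ := by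
  rw [← lintegral_const_mul' _ _ ENNReal.ofReal_ne_top]
  simp only [ENNReal.ofReal_mul hc]

lemma lcongr {s : Set ℝ} (hs : MeasurableSet s) {f g : ℝ → ℝ≥0∞} (h : ∀ x ∈ s, f x = g x) :
    ∫⁻ x in s, f x = ∫⁻ x in s, g x := setLIntegral_congr_fun hs h

lemma lsplit (f : ℝ → ℝ≥0∞) (hf : Measurable f) :
    ∫⁻ x, f x = ∫⁻ x in Ioi (0:ℝ), (f x + f (-x)) := by
  rw [lintegral_add_left hf]
  have h1 : ∫⁻ x in Iio (0:ℝ), f x = ∫⁻ x in Ioi (0:ℝ), f (-x) := by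
    rw [subst1 (φ := fun x => -x) (φ' := fun _ => -1) (s := Ioi 0) (t := Iio 0) measurableSet_Ioi
      (fun x _ => hasDerivAt_neg x) (bij_of_inv (ψ := fun x => -x) (by simp) (by simp) (by simp)
      (by simp)) f]
    simp
  have h2 : ∫⁻ x, f x = (∫⁻ x in Iic (0:ℝ), f x) + ∫⁻ x in Ioi (0:ℝ), f x := by
    rw [← lintegral_add_compl f (measurableSet_Iic (a := (0:ℝ))), compl_Iic]
  rw [h2, ← h1, setLIntegral_congr Iio_ae_eq_Iic, add_comm]

lemma leven (f : ℝ → ℝ≥0∞) (hf : Measurable f) (he : ∀ x, f (-x) = f x) :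
    ∫⁻ x, f x = 2 * ∫⁻ x in Ioi (0:ℝ), f x := by
  rw [lsplit f hf]
  simp only [he, ← two_mul]
  rw [lintegral_const_mul _ hf]

lemma lscale (c : ℝ) (hc : c ≠ 0) (f : ℝ → ℝ≥0∞) :
    ∫⁻ x, f x = ENNReal.ofReal |c| * ∫⁻ x, f (c * x) := by
  rw [← lintegral_const_mul' _ _ ENNReal.ofReal_ne_top]
  have := subst1 (φ := fun x => c * x) (φ' := fun _ => c) (s := univ) (t := univ) MeasurableSet.univ
    (fun x _ => by simpa using (hasDerivAt_id x).const_mul c)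
    (bij_of_inv (ψ := fun x => c⁻¹ * x) (by simp) (by simp) (by intro x _; field_simp)
      (by intro x _; field_simp)) f
  simpa using this

lemma lscale_pos (c : ℝ) (hc : 0 < c) (f : ℝ → ℝ≥0∞) :
    ∫⁻ x in Ioi (0:ℝ), f x = ENNReal.ofReal c * ∫⁻ x in Ioi (0:ℝ), f (c * x) := by
  rw [← lintegral_const_mul' _ _ ENNReal.ofReal_ne_top]
  have := subst1 (φ := fun x => c * x) (φ' := fun _ => c) (s := Ioi 0) (t := Ioi 0)
    measurableSet_Ioi
    (fun x _ => by simpa using (hasDerivAt_id x).const_mul c)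
    (bij_of_inv (ψ := fun x => c⁻¹ * x) (by intro x hx; simp at *; positivity)
      (by intro x hx; simp at *; positivity) (by intro x _; field_simp)
      (by intro x _; field_simp)) f
  rw [abs_of_pos hc] at this
  exact this

lemma lrot (h : ℝ → ℝ → ℝ≥0∞) (hm : Measurable (Function.uncurry h)) :
    ∫⁻ x, ∫⁻ y, h x y = 2 * ∫⁻ a, ∫⁻ b, h (a + b) (a - b) := by
  have m1 : Measurable (fun p : ℝ × ℝ => h p.1 (p.1 - 2 * p.2)) :=
    hm.comp (by fun_prop : Measurable (fun p : ℝ × ℝ => (p.1, p.1 - 2 * p.2)))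
  have m2 : Measurable (fun p : ℝ × ℝ => h (p.1 + p.2) (p.1 - p.2)) :=
    hm.comp (by fun_prop : Measurable (fun p : ℝ × ℝ => (p.1 + p.2, p.1 - p.2)))
  have e1 : ∀ x, ∫⁻ y, h x y = 2 * ∫⁻ b, h x (x - 2 * b) := by
    intro x
    have := lscale (-2) (by norm_num) (fun y => h x (y + x))
    rw [lintegral_add_right_eq_self (fun y => h x y) x] at this
    rw [this]
    congr 1
    · norm_num
    · congr 1; ext b; congr 1; ring
  simp_rw [e1]
  rw [lintegral_const_mul' _ _ (by norm_num)]
  rw [lintegral_lintegral_swap m1.aemeasurable,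
    lintegral_lintegral_swap (f := fun a b => h (a + b) (a - b)) m2.aemeasurable]
  congr 1
  congr 1; ext b
  rw [← lintegral_add_right_eq_self _ b]
  congr 1; ext a; congr 1; ring

lemma lint_of_integral {s : Set ℝ} (hs : MeasurableSet s) {f : ℝ → ℝ} (hf : IntegrableOn f s)
    (h0 : ∀ x ∈ s, 0 ≤ f x) :
    ∫⁻ x in s, ENNReal.ofReal (f x) = ENNReal.ofReal (∫ x in s, f x) := by
  rw [ofReal_integral_eq_lintegral_ofReal hf]
  exact (ae_restrict_iff' hs).2 (Filter.Eventually.of_forall h0)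

lemma lgamma (p c : ℝ) (hp : 0 < p) (hc : 0 < c) :
    ∫⁻ x in Ioi (0:ℝ), ENNReal.ofReal (x ^ (p - 1) * exp (-(c * x)))
      = ENNReal.ofReal (Gamma p * c ^ (-p)) := by
  rw [lint_of_integral measurableSet_Ioi, Real.integral_rpow_mul_exp_neg_mul_Ioi hp hc]
  · congr 1
    rw [one_div, inv_rpow hc.le, rpow_neg hc.le, mul_comm]
  · have := integrableOn_rpow_mul_exp_neg_mul_rpow (s := p - 1) (p := 1) (b := c) (by linarith)
      one_pos hc
    simpa using this
  · intro x hx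
    have : (0:ℝ) < x := hx
    positivity

lemma lexp (c : ℝ) (hc : 0 < c) :
    ∫⁻ x in Ioi (0:ℝ), ENNReal.ofReal (exp (-(c * x))) = ENNReal.ofReal (1 / c) := by
  have := lgamma 1 c one_pos hc
  simpa [rpow_neg_one] using this

lemma lsqexp (c : ℝ) (hc : 0 < c) :
    ∫⁻ x in Ioi (0:ℝ), ENNReal.ofReal (x * exp (-(c * x ^ 2))) = ENNReal.ofReal (1 / (2 * c)) := by
  have h := subst1 (φ := fun x => x ^ 2) (φ' := fun x => 2 * x) (s := Ioi 0) (t := Ioi 0)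
    measurableSet_Ioi (fun x _ => by simpa using hasDerivAt_pow 2 x)
    (bij_of_inv (ψ := fun x => √x) (by intro x hx; simp at *; positivity)
      (by intro x hx; simp at *; positivity)
      (by intro x hx; exact sqrt_sq (le_of_lt hx)) (by intro x hx; exact sq_sqrt (le_of_lt hx)))
    (fun x => ENNReal.ofReal (exp (-(c * x))))
  rw [lexp c hc] at h
  have h2 : ∫⁻ x in Ioi (0:ℝ), ENNReal.ofReal |2 * x| * ENNReal.ofReal (exp (-(c * x ^ 2)))
      = ENNReal.ofReal 2 * ∫⁻ x in Ioi (0:ℝ), ENNReal.ofReal (x * exp (-(c * x ^ 2))) := by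
    rw [cmul _ (by norm_num)]
    apply lcongr measurableSet_Ioi
    intro x hx
    have : (0:ℝ) < x := hx
    rw [abs_of_pos (by positivity), ← ENNReal.ofReal_mul (by positivity)]
    congr 1; ring
  rw [h2] at h
  have h3 : ENNReal.ofReal (1 / c) = ENNReal.ofReal 2 * ENNReal.ofReal (1 / (2 * c)) := by
    rw [← ENNReal.ofReal_mul (by norm_num)]
    congr 1; field_simp
  rw [h3] at h
  exact ((ENNReal.mul_right_inj (by norm_num) ENNReal.ofReal_ne_top).1 h).symm

lemma lgauss (c d : ℝ) (hc : 0 < c) :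
    ∫⁻ x, ENNReal.ofReal (exp (-(c * (x - d) ^ 2))) = ENNReal.ofReal (√(π / c)) := by
  have := lintegral_add_right_eq_self (μ := volume)
    (fun x => ENNReal.ofReal (exp (-(c * (x - d) ^ 2)))) d
  rw [← this, ← integral_gaussian c, ofReal_integral_eq_lintegral_ofReal
    (integrable_exp_neg_mul_sq hc) (Filter.Eventually.of_forall (fun x => (exp_pos _).le))]
  simp

end helpers


section bessel

lemma cosh_ge_sq (u : ℝ) : u ^ 2 / 4 ≤ Real.cosh u := by
  rw [← Real.cosh_abs, ← sq_abs, Real.cosh_eq]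
  have h := Real.quadratic_le_exp_of_nonneg (abs_nonneg u)
  have h2 := exp_pos (-|u|)
  have := abs_nonneg u
  linarith

lemma K0_integrable (x : ℝ) (hx : 0 < x) :
    Integrable (fun u : ℝ => exp (-(x * Real.cosh u))) := by
  apply (integrable_exp_neg_mul_sq (b := x / 4) (by positivity)).mono'
  · exact (by fun_prop : Continuous fun u : ℝ => exp (-(x * Real.cosh u))).aestronglyMeasurable
  · refine Filter.Eventually.of_forall fun u => ?_
    rw [norm_of_nonneg (exp_pos _).le]
    apply exp_le_exp.2
    have := mul_le_mul_of_nonneg_left (cosh_ge_sq u) hx.le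
    linarith

lemma ofReal_K0 (x : ℝ) (hx : 0 < x) :
    ENNReal.ofReal (K0 x) = ∫⁻ u in Ioi (0:ℝ), ENNReal.ofReal (exp (-(x * Real.cosh u))) := by
  rw [lint_of_integral measurableSet_Ioi (K0_integrable x hx).integrableOn
    (fun _ _ => (exp_pos _).le)]
  rfl

lemma two_K0 (x : ℝ) (hx : 0 < x) :
    2 * ENNReal.ofReal (K0 x) = ∫⁻ u, ENNReal.ofReal (exp (-(x * Real.cosh u))) := by
  rw [leven _ (by fun_prop) (by simp), ofReal_K0 x hx]

lemma two_K0_real (x : ℝ) : ∫ u, exp (-(x * Real.cosh u)) = 2 * K0 x := by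
  have := integral_comp_abs (f := fun u => exp (-(x * Real.cosh u)))
  simpa [K0] using this

lemma K0_nonneg (x : ℝ) : 0 ≤ K0 x :=
  setIntegral_nonneg measurableSet_Ioi (fun _ _ => (exp_pos _).le)

lemma I0_nonneg (x : ℝ) : 0 ≤ I0 x := by
  unfold I0
  have : 0 ≤ ∫ θ in (0:ℝ)..π, exp (x * cos θ) :=
    intervalIntegral.integral_nonneg pi_pos.le (fun _ _ => (exp_pos _).le)
  positivity

lemma K0_meas : Measurable K0 := by
  have : StronglyMeasurable (Function.uncurry fun x u : ℝ => exp (-(x * Real.cosh u))) := by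
    apply Continuous.stronglyMeasurable
    unfold Function.uncurry
    fun_prop
  exact (this.integral_prod_right (ν := volume.restrict (Ioi 0))).measurable

lemma I0_eq (x : ℝ) : I0 x = (1 / π) * ∫ θ in Ioo (0:ℝ) π, exp (x * cos θ) := by
  rw [I0, intervalIntegral.integral_of_le pi_pos.le, integral_Ioc_eq_integral_Ioo]

lemma I0_meas : Measurable I0 := by
  have : StronglyMeasurable (Function.uncurry fun x u : ℝ => exp (x * Real.cos u)) := by
    apply Continuous.stronglyMeasurable
    unfold Function.uncurry
    fun_prop
  have h := (this.integral_prod_right (ν := volume.restrict (Ioo 0 π))).measurable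
  have : I0 = fun x => (1 / π) * ∫ θ in Ioo (0:ℝ) π, exp (x * cos θ) := funext I0_eq
  rw [this]
  exact h.const_mul _

lemma ofReal_I0 (x : ℝ) : ENNReal.ofReal (I0 x)
    = ENNReal.ofReal (1 / π) * ∫⁻ θ in Ioo (0:ℝ) π, ENNReal.ofReal (exp (x * cos θ)) := by
  rw [I0_eq, ENNReal.ofReal_mul (by positivity), lint_of_integral measurableSet_Ioo]
  · have : Continuous fun θ : ℝ => exp (x * cos θ) := by fun_prop
    exact (this.integrableOn_Icc (a := 0) (b := π)).mono_set Ioo_subset_Icc_self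
  · exact fun u _ => (exp_pos _).le

lemma KA (a t : ℝ) (ha : 0 < a) (ht : 0 < t) :
    2 * ENNReal.ofReal (K0 (a * t)) = ∫⁻ α in Ioi (0:ℝ),
      ENNReal.ofReal (α⁻¹ * exp (-(α * a ^ 2 + t ^ 2 / (4 * α)))) := by
  rw [two_K0 _ (by positivity), ← setLIntegral_univ]
  rw [subst1 (φ := fun u => t / (2 * a) * exp u) (φ' := fun u => t / (2 * a) * exp u) (s := univ)
    (t := Ioi 0) MeasurableSet.univ (fun u _ => (Real.hasDerivAt_exp u).const_mul _)
    (bij_of_inv (ψ := fun y => log (y / (t / (2 * a)))) (by intro x _; simp only [mem_Ioi]; positivity)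
      (by simp) (by intro x _; rw [mul_div_cancel_left₀ _ (by positivity), log_exp])
      (by
        intro y hy
        have : (0:ℝ) < y := hy
        rw [exp_log (by positivity)]; field_simp))]
  apply lcongr MeasurableSet.univ
  intro u _
  have h1 : 0 < t / (2 * a) * exp u := by positivity
  rw [abs_of_pos h1, ← ENNReal.ofReal_mul h1.le, mul_inv_cancel_left₀ h1.ne']
  congr 3
  rw [Real.cosh_eq, exp_neg]
  have := exp_pos u
  field_simp
  ring

lemma K0_sq (t : ℝ) (ht : 0 < t) :
    ENNReal.ofReal (K0 t ^ 2) = 2 * ∫⁻ v in Ioi (0:ℝ), ENNReal.ofReal (K0 (2 * t * Real.cosh v)) := by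
  have h4 : 4 * ENNReal.ofReal (K0 t ^ 2)
      = 4 * (2 * ∫⁻ v in Ioi (0:ℝ), ENNReal.ofReal (K0 (2 * t * Real.cosh v))) := by
    calc 4 * ENNReal.ofReal (K0 t ^ 2)
        = (2 * ENNReal.ofReal (K0 t)) * (2 * ENNReal.ofReal (K0 t)) := by
          rw [sq, ENNReal.ofReal_mul (K0_nonneg t)]; ring
      _ = ∫⁻ x, ∫⁻ y, ENNReal.ofReal (exp (-(t * Real.cosh x)))
            * ENNReal.ofReal (exp (-(t * Real.cosh y))) := by
          rw [two_K0 t ht, ← lintegral_mul_const' _ _ (by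
            rw [← two_K0 t ht]; exact ENNReal.mul_ne_top (by norm_num) ENNReal.ofReal_ne_top)]
          congr 1; ext x
          rw [lintegral_const_mul' _ _ ENNReal.ofReal_ne_top]
      _ = 2 * ∫⁻ a, ∫⁻ b, ENNReal.ofReal (exp (-(2 * t * Real.cosh a * Real.cosh b))) := by
          rw [lrot _ (by unfold Function.uncurry; fun_prop)]
          congr 1; congr 1; ext a; congr 1; ext b
          rw [← ENNReal.ofReal_mul (exp_pos _).le, ← exp_add]
          congr 2
          rw [Real.cosh_add, Real.cosh_sub]; ring
      _ = 2 * ∫⁻ a, 2 * ENNReal.ofReal (K0 (2 * t * Real.cosh a)) := by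
          congr 1; congr 1; ext a
          rw [two_K0 _ (by have := Real.cosh_pos a; positivity)]
      _ = _ := by
          rw [lintegral_const_mul' _ _ (by norm_num), leven _ (by
            have := K0_meas; fun_prop) (by simp)]
          ring
  exact (ENNReal.mul_right_inj (by norm_num) (by norm_num)).1 h4

end bessel


section graf
open Filter Topology

lemma integrable_cexp (x y : ℝ) (hx : 0 < x) :
    Integrable (fun u : ℝ => Complex.exp (-(x * Real.cosh u : ℝ) + (y * Real.sinh u : ℝ) * Complex.I)) := by
  apply (K0_integrable x hx).mono'
  · exact (by fun_prop : Continuous fun u : ℝ => Complex.exp (-(x * Real.cosh u : ℝ)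
      + (y * Real.sinh u : ℝ) * Complex.I)).aestronglyMeasurable
  · refine Filter.Eventually.of_forall fun u => ?_
    rw [Complex.norm_exp]
    simp [-Complex.ofReal_cosh, -Complex.ofReal_sinh]

lemma side_cosh (ρ α u : ℝ) : -(ρ:ℂ) * Complex.cosh (u + α * Complex.I)
    = -((ρ * cos α) * Real.cosh u : ℝ) + ((-(ρ * sin α)) * Real.sinh u : ℝ) * Complex.I := by
  rw [Complex.cosh_add, Complex.cosh_mul_I, Complex.sinh_mul_I]
  push_cast
  ring

lemma shiftP_aux (ρ α : ℝ) (hρ : 0 < ρ) (hα : |α| < π / 2) :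
    ∫ u : ℝ, Complex.exp (-((ρ * cos α) * Real.cosh u : ℝ)
      + ((-(ρ * sin α)) * Real.sinh u : ℝ) * Complex.I) = ((2 * K0 ρ : ℝ) : ℂ) := by
  have hca : 0 < cos α := cos_pos_of_mem_Ioo ⟨by linarith [abs_lt.1 hα], (abs_lt.1 hα).2⟩
  set f : ℂ → ℂ := fun z => Complex.exp (-(ρ:ℂ) * Complex.cosh z) with hf
  have hfd : Differentiable ℂ f := by
    intro z; simp only [hf]
    fun_prop
  have hrect := fun R : ℝ => Complex.integral_boundary_rect_eq_zero_of_differentiableOn f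
    (((-R : ℝ) : ℂ)) ((R : ℂ) + α * Complex.I) hfd.differentiableOn
  have t1 : Tendsto (fun R : ℝ => ∫ x in (-R)..R, f ((x:ℂ) + (0:ℝ) * Complex.I)) atTop
      (𝓝 (∫ x : ℝ, f ((x:ℂ) + (0:ℝ) * Complex.I))) := by
    apply intervalIntegral_tendsto_integral _ tendsto_neg_atTop_atBot tendsto_id
    simp only [hf, side_cosh]
    apply integrable_cexp
    simpa using hρ
  have t2 : Tendsto (fun R : ℝ => ∫ x in (-R)..R, f ((x:ℂ) + α * Complex.I)) atTop
      (𝓝 (∫ x : ℝ, f ((x:ℂ) + α * Complex.I))) := by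
    apply intervalIntegral_tendsto_integral _ tendsto_neg_atTop_atBot tendsto_id
    simp only [hf, side_cosh]
    apply integrable_cexp
    positivity
  have hbd : ∀ R : ℝ, ‖∫ y in (0:ℝ)..α, f ((R:ℂ) + y * Complex.I)‖
      ≤ exp (-((ρ * cos α) * Real.cosh R)) * |α - 0| := by
    intro R
    apply intervalIntegral.norm_integral_le_of_norm_le_const
    intro y hy
    simp only [hf, side_cosh]
    rw [Complex.norm_exp]
    simp only [Complex.add_re, Complex.neg_re, Complex.ofReal_re, Complex.mul_re, Complex.I_re,
      Complex.I_im, Complex.ofReal_im]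
    apply exp_le_exp.2
    have hy2 : |y| ≤ |α| := by
      rcases le_total 0 α with h | h
      · rw [uIoc_of_le h] at hy
        rw [abs_of_pos hy.1, abs_of_nonneg h]; exact hy.2
      · rw [uIoc_of_ge h] at hy
        rw [abs_of_nonpos hy.2, abs_of_nonpos h]; linarith [hy.1]
    have : cos α ≤ cos y := by
      rw [← cos_abs α, ← cos_abs y]
      exact cos_le_cos_of_nonneg_of_le_pi (abs_nonneg _) (by linarith [pi_pos]) hy2
    have h1 := Real.cosh_pos R
    have h2 : ρ * cos α * Real.cosh R ≤ ρ * cos y * Real.cosh R := by gcongr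
    linarith
  have hlim : Tendsto (fun R : ℝ => exp (-((ρ * cos α) * Real.cosh R)) * |α - 0|) atTop (𝓝 0) := by
    suffices h : Tendsto (fun R : ℝ => exp (-((ρ * cos α) * Real.cosh R))) atTop (𝓝 0) by
      simpa using h.mul_const |α - 0|
    apply tendsto_exp_neg_atTop_nhds_zero.comp
    apply Tendsto.const_mul_atTop (by positivity)
    apply tendsto_atTop_mono (f := fun x : ℝ => x + (-1)) (fun x => ?_) (tendsto_atTop_add_const_right _ _ tendsto_id)
    nlinarith [cosh_ge_sq x, Real.one_le_cosh x, sq_nonneg (x - 2)]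
  have t3 : Tendsto (fun R : ℝ => ∫ y in (0:ℝ)..α, f ((R:ℂ) + y * Complex.I)) atTop (𝓝 0) :=
    squeeze_zero_norm hbd hlim
  have t4 : Tendsto (fun R : ℝ => ∫ y in (0:ℝ)..α, f (((-R : ℝ):ℂ) + y * Complex.I)) atTop (𝓝 0) :=
    squeeze_zero_norm (fun R => hbd (-R)) (by simpa using hlim)
  have t5 := ((t1.sub t2).add (t3.const_smul Complex.I)).sub (t4.const_smul Complex.I)
  have t6 : (∫ x : ℝ, f ((x:ℂ) + (0:ℝ) * Complex.I)) = ∫ x : ℝ, f ((x:ℂ) + α * Complex.I) := by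
    have := tendsto_nhds_unique t5 (tendsto_const_nhds (x := (0:ℂ)) |>.congr fun R => by
      have := hrect R
      simpa using this.symm)
    simp only [smul_zero, add_zero, sub_zero] at this
    exact sub_eq_zero.1 this
  simp only [hf, side_cosh] at t6
  rw [← t6, ← two_K0_real, ← integral_complex_ofReal]
  congr 1; ext u
  rw [Complex.ofReal_exp]
  simp

lemma shiftP (x y : ℝ) (hx : 0 < x) :
    ∫ u : ℝ, Complex.exp (-(x * Real.cosh u : ℝ) + (y * Real.sinh u : ℝ) * Complex.I)
      = ((2 * K0 (√(x ^ 2 + y ^ 2)) : ℝ) : ℂ) := by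
  set z : ℂ := ⟨x, -y⟩ with hz
  have h1 : ‖z‖ = √(x ^ 2 + y ^ 2) := by
    rw [Complex.norm_def, Complex.normSq_apply]
    congr 1; simp [hz]; ring
  have h2 : ‖z‖ * cos z.arg = x := Complex.norm_mul_cos_arg z
  have h3 : ‖z‖ * sin z.arg = -y := Complex.norm_mul_sin_arg z
  have := shiftP_aux ‖z‖ z.arg (by rw [h1]; positivity)
    (Complex.abs_arg_lt_pi_div_two_iff.2 (Or.inl hx))
  rw [h2, h3, h1, neg_neg] at this
  exact this

lemma shiftQ (b u : ℝ) :
    ∫ θ in (-π)..π, Complex.exp ((b * cos θ * Real.cosh u : ℝ) + (b * sin θ * Real.sinh u : ℝ) * Complex.I)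
      = ((2 * π * I0 b : ℝ) : ℂ) := by
  set f : ℂ → ℂ := fun z => Complex.exp ((b:ℂ) * Complex.cos z) with hf
  have hfd : Differentiable ℂ f := by
    intro z; simp only [hf]
    fun_prop
  have hrect := Complex.integral_boundary_rect_eq_zero_of_differentiableOn f
    (((-π : ℝ) : ℂ)) ((π : ℂ) + ((-u : ℝ):ℂ) * Complex.I) hfd.differentiableOn
  have hper : ∀ y : ℂ, f (π + y) = f (-π + y) := by
    intro y
    simp only [hf]
    congr 2
    rw [show (π:ℂ) + y = (-π + y) + 2 * π by ring, Complex.cos_add_two_pi]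
  simp [hper] at hrect
  have e1 : ∀ x : ℝ, f (x + -(u * Complex.I)) = Complex.exp ((b * cos x * Real.cosh u : ℝ)
      + (b * sin x * Real.sinh u : ℝ) * Complex.I) := by
    intro x
    simp only [hf]
    congr 1
    rw [← sub_eq_add_neg, Complex.cos_sub, Complex.cos_mul_I, Complex.sin_mul_I]
    push_cast; ring
  simp only [e1] at hrect
  rw [← sub_eq_zero.1 hrect]
  have e2 : ∀ x : ℝ, f x = ((exp (b * cos x) : ℝ) : ℂ) := by
    intro x; simp [hf]
  simp only [e2]
  rw [intervalIntegral.integral_ofReal]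
  congr 1
  have hc : Continuous fun x : ℝ => exp (b * cos x) := by fun_prop
  rw [← intervalIntegral.integral_add_adjacent_intervals (b := 0) (hc.intervalIntegrable _ _)
    (hc.intervalIntegrable _ _)]
  have := intervalIntegral.integral_comp_neg (a := 0) (b := π) (fun x : ℝ => exp (b * cos x))
  simp only [cos_neg, neg_zero] at this
  rw [← this, I0]
  field_simp
  ring

lemma graf_bound (b : ℝ) (hb : 0 < b) :
    ∫⁻ u, ∫⁻ θ in Ioc (-π) π, ENNReal.ofReal (exp (-(b * (1 - cos θ) * Real.cosh u))) < ⊤ := by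
  have h1 : ∀ u : ℝ, ∫⁻ θ in Ioc (-π) π, ENNReal.ofReal (exp (-(b * (1 - cos θ) * Real.cosh u)))
      ≤ ENNReal.ofReal (√(π / (2 * b / π ^ 2 * Real.cosh u))) := by
    intro u
    have hu := Real.cosh_pos u
    rw [← lgauss (2 * b / π ^ 2 * Real.cosh u) 0 (by positivity)]
    refine le_trans (setLIntegral_mono' (g := fun θ => ENNReal.ofReal (exp (-(2 * b / π ^ 2 * Real.cosh u * (θ - 0) ^ 2))))
      measurableSet_Ioc ?_) (setLIntegral_le_lintegral _ _)
    intro θ hθ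
    apply ENNReal.ofReal_le_ofReal
    apply exp_le_exp.2
    have h := Real.cos_le_one_sub_mul_cos_sq (x := θ) (abs_le.2 ⟨hθ.1.le, hθ.2⟩)
    have h2 : b * (2 / π ^ 2 * θ ^ 2) * Real.cosh u ≤ b * (1 - cos θ) * Real.cosh u := by
      gcongr; linarith
    have h3 : b * (2 / π ^ 2 * θ ^ 2) * Real.cosh u = 2 * b / π ^ 2 * Real.cosh u * (θ - 0) ^ 2 := by
      ring
    linarith
  refine lt_of_le_of_lt (lintegral_mono h1) ?_
  have h2 : ∀ u : ℝ, √(π / (2 * b / π ^ 2 * Real.cosh u)) ≤ √(π ^ 3 / b) * exp (-(1/2 * |u|)) := by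
    intro u
    have hu := Real.cosh_pos u
    rw [show π / (2 * b / π ^ 2 * Real.cosh u) = (π ^ 3 / b) * (1 / (2 * Real.cosh u)) by field_simp]
    rw [sqrt_mul (by positivity)]
    gcongr
    rw [sqrt_le_left (exp_pos _).le, ← exp_nat_mul, ← Real.cosh_abs, Real.cosh_eq]
    rw [show ((2:ℕ):ℝ) * -(1 / 2 * |u|) = -|u| by push_cast; ring, exp_neg]
    have := exp_pos |u|
    rw [one_div]
    apply inv_anti₀ this
    have := inv_pos.2 this
    linarith
  refine lt_of_le_of_lt (lintegral_mono fun u => ENNReal.ofReal_le_ofReal (h2 u)) ?_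
  rw [leven _ (by fun_prop) (by simp), ← lcongr (f := fun u => ENNReal.ofReal (√(π ^ 3 / b) * exp (-(1/2 * u))))
    measurableSet_Ioi (fun u hu => by rw [abs_of_pos hu]), ← cmul _ (by positivity), lexp _ (by norm_num)]
  exact ENNReal.mul_lt_top (by norm_num) (ENNReal.mul_lt_top ENNReal.ofReal_lt_top ENNReal.ofReal_lt_top)

lemma graf (a b : ℝ) (hb : 0 < b) (hab : b ≤ a) :
    ENNReal.ofReal (K0 a * I0 b) = ENNReal.ofReal (1 / π) *
      ∫⁻ θ in Ioo (0:ℝ) π, ENNReal.ofReal (K0 (√(a ^ 2 + b ^ 2 - 2 * a * b * cos θ))) := by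
  have ha : 0 < a := by linarith
  set F : ℝ → ℝ → ℂ := fun u θ => Complex.exp (-((a - b * cos θ) * Real.cosh u : ℝ)
    + (b * sin θ * Real.sinh u : ℝ) * Complex.I) with hF
  have hFc : Continuous (Function.uncurry F) := by
    simp only [hF]; unfold Function.uncurry; fun_prop
  have hFi : Integrable (Function.uncurry F) (volume.prod (volume.restrict (Ioc (-π) π))) := by
    refine ⟨hFc.aestronglyMeasurable, ?_⟩
    rw [HasFiniteIntegral, lintegral_prod _ (by fun_prop)]
    refine lt_of_le_of_lt (lintegral_mono fun u => lintegral_mono fun θ => ?_) (graf_bound b hb)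
    simp only [Function.uncurry, hF]
    rw [← ofReal_norm, Complex.norm_exp]
    apply ENNReal.ofReal_le_ofReal
    apply exp_le_exp.2
    have := Real.cosh_pos u
    have h2 : b * (1 - cos θ) * Real.cosh u ≤ (a - b * cos θ) * Real.cosh u := by
      gcongr; linarith
    simp only [Complex.add_re, Complex.neg_re, Complex.ofReal_re, Complex.mul_re, Complex.I_re,
      Complex.I_im, Complex.ofReal_im]
    linarith
  set G : ℝ → ℝ := fun θ => K0 (√(a ^ 2 + b ^ 2 - 2 * a * b * cos θ)) with hG
  have hae : ∀ᵐ θ ∂(volume.restrict (Ioc (-π) π)), ∫ u, F u θ = ((2 * G θ : ℝ) : ℂ) := by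
    rw [ae_restrict_iff' measurableSet_Ioc]
    filter_upwards [(measure_eq_zero_iff_ae_notMem.1 (measure_singleton (0:ℝ)) : ∀ᵐ x : ℝ, x ∉ ({0} : Set ℝ))] with θ h0 hθ
    have hc : cos θ < 1 := by
      rcases lt_or_eq_of_le (cos_le_one θ) with h | h
      · exact h
      · exact absurd ((cos_eq_one_iff_of_lt_of_lt (by linarith [hθ.1, pi_pos]) (by linarith [hθ.2, pi_pos])).1 h) h0
    simp only [hF]
    rw [shiftP _ _ (by nlinarith)]
    simp only [hG]
    congr 4
    linear_combination b ^ 2 * (sin_sq_add_cos_sq θ)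
  have hsw := integral_integral_swap hFi
  have hL : ∫ u, ∫ θ in Ioc (-π) π, F u θ = ((4 * π * (K0 a * I0 b) : ℝ) : ℂ) := by
    have : ∀ u, ∫ θ in Ioc (-π) π, F u θ = (((2 * π * I0 b) * exp (-(a * Real.cosh u)) : ℝ) : ℂ) := by
      intro u
      rw [Complex.ofReal_mul, ← shiftQ b u, ← intervalIntegral.integral_of_le (by linarith [pi_pos]),
        ← intervalIntegral.integral_mul_const]
      congr 1; ext θ
      simp only [hF]
      rw [Complex.ofReal_exp, ← Complex.exp_add]
      congr 1
      push_cast; ring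
    simp only [this]
    rw [integral_complex_ofReal, integral_const_mul, two_K0_real]
    congr 1
    ring
  have hGi : IntegrableOn (fun θ => 2 * G θ) (Ioc (-π) π) := by
    have h := hFi.integral_prod_right.congr hae
    simpa [IntegrableOn] using h.re
  have hR : ∫ θ in Ioc (-π) π, ∫ u, F u θ = ((∫ θ in Ioc (-π) π, 2 * G θ : ℝ) : ℂ) := by
    rw [integral_congr_ae hae, integral_complex_ofReal]
  rw [hL, hR] at hsw
  have hsw' := Complex.ofReal_injective hsw
  have hGm : Measurable G := by
    have := K0_meas
    simp only [hG]; fun_prop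
  have h4 : ENNReal.ofReal (4 * π * (K0 a * I0 b)) = 4 * ∫⁻ θ in Ioo (0:ℝ) π, ENNReal.ofReal (G θ) := by
    rw [hsw', ← lint_of_integral measurableSet_Ioc hGi (fun θ _ => mul_nonneg (by norm_num) (K0_nonneg _))]
    rw [← cmul 2 (by norm_num), ← lintegral_indicator measurableSet_Ioc, lsplit _ (by
      apply Measurable.indicator (by fun_prop) measurableSet_Ioc)]
    have e : ∀ x ∈ Ioi (0:ℝ), (Ioc (-π) π).indicator (fun θ => ENNReal.ofReal (G θ)) x +
        (Ioc (-π) π).indicator (fun θ => ENNReal.ofReal (G θ)) (-x)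
        = (Ioc 0 π).indicator (fun θ => ENNReal.ofReal (G θ)) x
        + (Ioo 0 π).indicator (fun θ => ENNReal.ofReal (G θ)) x := by
      intro x hx
      have hx : 0 < x := hx
      have hGe : G (-x) = G x := by simp [hG]
      congr 1
      · simp only [indicator, mem_Ioc]
        congr 1; apply propext; constructor <;> rintro ⟨h1, h2⟩ <;> constructor <;> linarith
      · simp only [indicator, mem_Ioc, mem_Ioo, hGe]
        congr 1; apply propext; constructor <;> rintro ⟨h1, h2⟩ <;> constructor <;> linarith
    rw [lcongr measurableSet_Ioi e, lintegral_add_left (by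
      apply Measurable.indicator (by fun_prop) measurableSet_Ioc),
      setLIntegral_indicator measurableSet_Ioc, setLIntegral_indicator measurableSet_Ioo]
    rw [inter_eq_self_of_subset_left (fun x hx => hx.1), inter_eq_self_of_subset_left (fun x hx => hx.1)]
    rw [setLIntegral_congr Ioo_ae_eq_Ioc.symm, ← two_mul, ← mul_assoc]
    norm_num
  have h5 : ENNReal.ofReal (4 * π) * ENNReal.ofReal (K0 a * I0 b) = ENNReal.ofReal (4 * π) * (ENNReal.ofReal (1 / π) *
      ∫⁻ θ in Ioo (0:ℝ) π, ENNReal.ofReal (G θ)) := by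
    rw [← ENNReal.ofReal_mul (by positivity), h4, ← mul_assoc, ← ENNReal.ofReal_mul (by positivity)]
    congr 1
    rw [mul_one_div, mul_div_cancel_right₀ _ pi_ne_zero]
    norm_num
  exact (ENNReal.mul_right_inj (by simp [pi_pos]) ENNReal.ofReal_ne_top).1 h5

end graf


section swaps
variable {μ ν ρ σ τ υ : Measure ℝ} [SFinite μ] [SFinite ν] [SFinite ρ] [SFinite σ] [SFinite τ] [SFinite υ]

lemma lsw2 (f : ℝ → ℝ → ℝ≥0∞) (hf : Measurable fun p : ℝ × ℝ => f p.1 p.2) :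
    ∫⁻ t, ∫⁻ a, f t a ∂ν ∂μ = ∫⁻ a, ∫⁻ t, f t a ∂μ ∂ν :=
  lintegral_lintegral_swap hf.aemeasurable

lemma lsw3 (f : ℝ → ℝ → ℝ → ℝ≥0∞) (hf : Measurable fun p : ℝ × ℝ × ℝ => f p.1 p.2.1 p.2.2) :
    ∫⁻ t, ∫⁻ a, ∫⁻ b, f t a b ∂ρ ∂ν ∂μ = ∫⁻ a, ∫⁻ b, ∫⁻ t, f t a b ∂μ ∂ρ ∂ν := by
  rw [lsw2 (fun t a => ∫⁻ b, f t a b ∂ρ) (Measurable.lintegral_prod_right'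
    (f := fun q : (ℝ × ℝ) × ℝ => f q.1.1 q.1.2 q.2)
    (hf.comp (by fun_prop : Measurable fun q : (ℝ × ℝ) × ℝ => (q.1.1, q.1.2, q.2))))]
  congr 1; ext a
  exact lsw2 (fun t b => f t a b) (hf.comp (by fun_prop : Measurable fun q : ℝ × ℝ => (q.1, a, q.2)))

lemma lsw4 (f : ℝ → ℝ → ℝ → ℝ → ℝ≥0∞)
    (hf : Measurable fun p : ℝ × ℝ × ℝ × ℝ => f p.1 p.2.1 p.2.2.1 p.2.2.2) :
    ∫⁻ t, ∫⁻ a, ∫⁻ b, ∫⁻ c, f t a b c ∂σ ∂ρ ∂ν ∂μ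
      = ∫⁻ a, ∫⁻ b, ∫⁻ c, ∫⁻ t, f t a b c ∂μ ∂σ ∂ρ ∂ν := by
  rw [lsw3 (fun t a b => ∫⁻ c, f t a b c ∂σ) (Measurable.lintegral_prod_right'
    (f := fun q : (ℝ × ℝ × ℝ) × ℝ => f q.1.1 q.1.2.1 q.1.2.2 q.2)
    (hf.comp (by fun_prop : Measurable fun q : (ℝ × ℝ × ℝ) × ℝ => (q.1.1, q.1.2.1, q.1.2.2, q.2))))]
  congr 1; ext a; congr 1; ext b
  exact lsw2 (fun t c => f t a b c) (hf.comp (by fun_prop : Measurable fun q : ℝ × ℝ => (q.1, a, b, q.2)))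

lemma lsw33 (f : ℝ → ℝ → ℝ → ℝ → ℝ → ℝ → ℝ≥0∞)
    (hf : Measurable fun p : ℝ × ℝ × ℝ × ℝ × ℝ × ℝ =>
      f p.1 p.2.1 p.2.2.1 p.2.2.2.1 p.2.2.2.2.1 p.2.2.2.2.2) :
    ∫⁻ a, ∫⁻ b, ∫⁻ c, ∫⁻ x, ∫⁻ y, ∫⁻ z, f a b c x y z ∂υ ∂τ ∂σ ∂ρ ∂ν ∂μ
      = ∫⁻ x, ∫⁻ y, ∫⁻ z, ∫⁻ a, ∫⁻ b, ∫⁻ c, f a b c x y z ∂ρ ∂ν ∂μ ∂υ ∂τ ∂σ := by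
  have e1 : ∀ a b, ∫⁻ c, ∫⁻ x, ∫⁻ y, ∫⁻ z, f a b c x y z ∂υ ∂τ ∂σ ∂ρ
      = ∫⁻ x, ∫⁻ y, ∫⁻ z, ∫⁻ c, f a b c x y z ∂ρ ∂υ ∂τ ∂σ := fun a b =>
    lsw4 (fun c x y z => f a b c x y z) (hf.comp (by fun_prop : Measurable fun q : ℝ × ℝ × ℝ × ℝ =>
      (a, b, q.1, q.2.1, q.2.2.1, q.2.2.2)))
  simp only [e1]
  have e2 : ∀ a, ∫⁻ b, ∫⁻ x, ∫⁻ y, ∫⁻ z, ∫⁻ c, f a b c x y z ∂ρ ∂υ ∂τ ∂σ ∂ν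
      = ∫⁻ x, ∫⁻ y, ∫⁻ z, ∫⁻ b, ∫⁻ c, f a b c x y z ∂ρ ∂ν ∂υ ∂τ ∂σ := fun a =>
    lsw4 (fun b x y z => ∫⁻ c, f a b c x y z ∂ρ) (Measurable.lintegral_prod_right'
      (f := fun q : (ℝ × ℝ × ℝ × ℝ) × ℝ => f a q.1.1 q.2 q.1.2.1 q.1.2.2.1 q.1.2.2.2)
      (hf.comp (by fun_prop : Measurable fun q : (ℝ × ℝ × ℝ × ℝ) × ℝ =>
        (a, q.1.1, q.2, q.1.2.1, q.1.2.2.1, q.1.2.2.2))))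
  simp only [e2]
  refine lsw4 (fun a x y z => ∫⁻ b, ∫⁻ c, f a b c x y z ∂ρ ∂ν) (Measurable.lintegral_prod_right'
      (f := fun q : (ℝ × ℝ × ℝ × ℝ) × ℝ => ∫⁻ c, f q.1.1 q.2 c q.1.2.1 q.1.2.2.1 q.1.2.2.2 ∂ρ) ?_)
  exact Measurable.lintegral_prod_right'
    (f := fun r : ((ℝ × ℝ × ℝ × ℝ) × ℝ) × ℝ => f r.1.1.1 r.1.2 r.2 r.1.1.2.1 r.1.1.2.2.1 r.1.1.2.2.2)
    (hf.comp (by fun_prop : Measurable fun r : ((ℝ × ℝ × ℝ × ℝ) × ℝ) × ℝ =>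
      (r.1.1.1, r.1.2, r.2, r.1.1.2.1, r.1.1.2.2.1, r.1.1.2.2.2)))

end swaps

section kints

lemma lsym (c : ℝ) (f : ℝ → ℝ≥0∞) (hf : Measurable f) (he : ∀ x, f (-x) = f x) :
    ∫⁻ x in Ioo (-c) c, f x = 2 * ∫⁻ x in Ioo 0 c, f x := by
  have h1 : ∀ x, (Ioo (-c) c).indicator f (-x) = (Ioo (-c) c).indicator f x := by
    intro x
    simp only [indicator, mem_Ioo, he]
    congr 1; apply propext; constructor <;> rintro ⟨h1, h2⟩ <;> constructor <;> linarith
  rw [← lintegral_indicator measurableSet_Ioo, leven _ (hf.indicator measurableSet_Ioo) h1,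
    setLIntegral_indicator measurableSet_Ioo]
  congr 3
  ext x; simp only [mem_inter_iff, mem_Ioo, mem_Ioi]
  constructor
  · rintro ⟨⟨h1, h2⟩, h3⟩; exact ⟨h3, h2⟩
  · rintro ⟨h1, h2⟩; exact ⟨⟨by linarith, h2⟩, h1⟩

lemma lpolar (f : ℝ → ℝ → ℝ≥0∞) (hf : Measurable fun p : ℝ × ℝ => f p.1 p.2) :
    ∫⁻ x, ∫⁻ y, f x y = ∫⁻ r in Ioi (0:ℝ), ∫⁻ θ in Ioo (-π) π,
      ENNReal.ofReal r * f (r * cos θ) (r * sin θ) := by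
  have h := lintegral_comp_polarCoord_symm (fun p : ℝ × ℝ => f p.1 p.2)
  rw [Measure.volume_eq_prod, lintegral_prod _ hf.aemeasurable] at h
  rw [← h, polarCoord_target, ← Measure.prod_restrict, lintegral_prod]
  · simp [polarCoord_symm_apply]
  · simp only [polarCoord_symm_apply, smul_eq_mul]
    have := hf.comp (by fun_prop : Measurable fun p : ℝ × ℝ => (p.1 * cos p.2, p.1 * sin p.2))
    exact (Measurable.mul (by fun_prop) this).aemeasurable

lemma langle (p q : ℝ) (hq : 0 ≤ q) (hpq : q < p) :
    ∫⁻ θ in Ioo (0:ℝ) π, ENNReal.ofReal (1 / (p - q * cos θ))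
      = ENNReal.ofReal (π / √(p ^ 2 - q ^ 2)) := by
  have hbij : BijOn (fun x : ℝ => 2 * arctan x) (Ioi 0) (Ioo 0 π) :=
    bij_of_inv (ψ := fun θ => tan (θ / 2)) (by
      intro x hx
      have := arctan_pos.2 hx
      have := arctan_lt_pi_div_two x
      exact ⟨by linarith, by linarith⟩) (by
      intro y hy
      exact tan_pos_of_pos_of_lt_pi_div_two (by linarith [hy.1]) (by linarith [hy.2])) (by
      intro x hx
      simp [tan_arctan]) (by
      intro y hy
      rw [arctan_tan (by linarith [hy.1, pi_pos]) (by linarith [hy.2])]; ring)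
  rw [subst1 (φ' := fun x => 2 * (1 / (1 + x ^ 2))) measurableSet_Ioi
    (fun x _ => (hasDerivAt_arctan x).const_mul 2) hbij]
  set c := √((p - q) / (p + q)) with hc
  have hc0 : 0 < c := sqrt_pos.2 (by apply div_pos <;> linarith)
  rw [lscale_pos c hc0]
  have hc2 : c ^ 2 * (p + q) = p - q := by
    rw [hc, sq_sqrt (by apply div_nonneg <;> linarith)]
    field_simp [(by linarith : p + q ≠ 0)]
  have key : ∀ x ∈ Ioi (0:ℝ), ENNReal.ofReal |2 * (1 / (1 + (c * x) ^ 2))|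
      * ENNReal.ofReal (1 / (p - q * cos (2 * arctan (c * x))))
      = ENNReal.ofReal (2 / (p - q) * (1 + x ^ 2)⁻¹) := by
    intro x hx
    rw [abs_of_pos (by positivity), ← ENNReal.ofReal_mul (by positivity)]
    congr 1
    rw [cos_two_mul, cos_sq_arctan]
    have h1 : p - q * (2 * (1 / (1 + (c * x) ^ 2)) - 1) = (p - q) * (1 + x ^ 2) / (1 + (c * x) ^ 2) := by
      rw [eq_div_iff (by positivity)]
      field_simp
      linear_combination x ^ 2 * hc2
    rw [h1]
    have : p - q ≠ 0 := by linarith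
    have : 1 + x ^ 2 ≠ 0 := by positivity
    field_simp
  rw [lcongr measurableSet_Ioi key, ← cmul _ (by apply div_nonneg <;> linarith),
    lint_of_integral measurableSet_Ioi (integrable_inv_one_add_sq.integrableOn)
      (fun x _ => by positivity), integral_Ioi_inv_one_add_sq, arctan_zero,
    ← ENNReal.ofReal_mul (by apply div_nonneg <;> linarith), ← ENNReal.ofReal_mul hc0.le]
  congr 1
  have h3 : √(p ^ 2 - q ^ 2) = c * (p + q) := by
    rw [show p ^ 2 - q ^ 2 = (c * (p + q)) ^ 2 by linear_combination (-(p + q)) * hc2]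
    exact sqrt_sq (by apply mul_nonneg hc0.le; linarith)
  have : p + q ≠ 0 := by linarith
  rw [h3, ← hc2]
  field_simp
  ring

lemma weber (p q : ℝ) (hp : 0 < p) :
    ∫⁻ k in Ioi (0:ℝ), ENNReal.ofReal (k * exp (-(p * k ^ 2)) * I0 (q * k))
      = ENNReal.ofReal (1 / (2 * p) * exp (q ^ 2 / (4 * p))) := by
  have h1 : ∫⁻ x : ℝ, ∫⁻ y : ℝ, ENNReal.ofReal (exp (-(p * (x ^ 2 + y ^ 2)) + q * x))
      = ENNReal.ofReal (π / p * exp (q ^ 2 / (4 * p))) := by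
    have : ∀ x y : ℝ, exp (-(p * (x ^ 2 + y ^ 2)) + q * x)
        = (exp (q ^ 2 / (4 * p)) * exp (-(p * (x - q / (2 * p)) ^ 2))) * exp (-(p * (y - 0) ^ 2)) := by
      intro x y
      rw [← exp_add, ← exp_add]
      congr 1; field_simp; ring
    simp only [this]
    have e : ∀ x : ℝ, ∫⁻ y : ℝ, ENNReal.ofReal ((exp (q ^ 2 / (4 * p)) * exp (-(p * (x - q / (2 * p)) ^ 2))) * exp (-(p * (y - 0) ^ 2)))
        = ENNReal.ofReal ((√(π / p) * exp (q ^ 2 / (4 * p))) * exp (-(p * (x - q / (2 * p)) ^ 2))) := by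
      intro x
      rw [← cmul _ (by positivity), lgauss _ _ hp, ← ENNReal.ofReal_mul (by positivity)]
      congr 1; ring
    simp only [e]
    rw [← cmul _ (by positivity), lgauss _ _ hp, ← ENNReal.ofReal_mul (by positivity)]
    congr 1
    rw [mul_right_comm, mul_self_sqrt (by positivity)]
  rw [lpolar _ (by fun_prop)] at h1
  have h2 : ∀ r ∈ Ioi (0:ℝ), ∫⁻ θ in Ioo (-π) π, ENNReal.ofReal r *
      ENNReal.ofReal (exp (-(p * ((r * cos θ) ^ 2 + (r * sin θ) ^ 2)) + q * (r * cos θ)))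
      = ENNReal.ofReal ((2 * π) * (r * exp (-(p * r ^ 2)) * I0 (q * r))) := by
    intro r hr
    have hr : 0 < r := hr
    rw [lsym _ _ (by fun_prop) (by simp)]
    rw [show (2 * π) * (r * exp (-(p * r ^ 2)) * I0 (q * r))
      = (2 * π * (r * exp (-(p * r ^ 2)))) * I0 (q * r) by ring, ENNReal.ofReal_mul (by positivity), ofReal_I0,
      ← mul_assoc, ← ENNReal.ofReal_mul (by positivity), cmul _ (by positivity),
      show (2:ℝ≥0∞) = ENNReal.ofReal 2 by norm_num]
    simp only [← ENNReal.ofReal_mul hr.le]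
    rw [cmul _ (by norm_num)]
    congr 1; ext θ; congr 1
    rw [show -(p * ((r * cos θ) ^ 2 + (r * sin θ) ^ 2)) + q * (r * cos θ)
      = -(p * r ^ 2) + q * r * cos θ by linear_combination (-p * r ^ 2) * sin_sq_add_cos_sq θ, exp_add]
    field_simp
  rw [lcongr measurableSet_Ioi h2, ← cmul _ (by positivity)] at h1
  have h3 : ENNReal.ofReal (π / p * exp (q ^ 2 / (4 * p))) = ENNReal.ofReal (2 * π) *
      ENNReal.ofReal (1 / (2 * p) * exp (q ^ 2 / (4 * p))) := by
    rw [← ENNReal.ofReal_mul (by positivity)]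
    congr 1; field_simp
  rw [h3] at h1
  exact (ENNReal.mul_right_inj (by simp [pi_pos]) ENNReal.ofReal_ne_top).1 h1

end kints


section kk

lemma lprod2 {s t : Set ℝ} (hs : MeasurableSet s) {f g : ℝ → ℝ} (hf : Measurable f)
    (h0 : ∀ x ∈ s, 0 ≤ f x) :
    (∫⁻ a in s, ENNReal.ofReal (f a)) * (∫⁻ b in t, ENNReal.ofReal (g b))
      = ∫⁻ a in s, ∫⁻ b in t, ENNReal.ofReal (f a * g b) := by
  rw [← lintegral_mul_const _ (by fun_prop)]
  apply lcongr hs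
  intro a ha
  rw [cmul _ (h0 a ha)]

lemma lprod3 {s t u : Set ℝ} (hs : MeasurableSet s) (ht : MeasurableSet t) {f g h : ℝ → ℝ}
    (hf : Measurable f) (hg : Measurable g)
    (h0 : ∀ x ∈ s, 0 ≤ f x) (h1 : ∀ x ∈ t, 0 ≤ g x) :
    (∫⁻ a in s, ENNReal.ofReal (f a)) * ((∫⁻ b in t, ENNReal.ofReal (g b)) *
      (∫⁻ c in u, ENNReal.ofReal (h c)))
      = ∫⁻ a in s, ∫⁻ b in t, ∫⁻ c in u, ENNReal.ofReal (f a * (g b * h c)) := by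
  rw [lprod2 ht hg h1, ← lintegral_mul_const _ (by fun_prop)]
  apply lcongr hs
  intro a ha
  rw [← lintegral_const_mul' _ _ ENNReal.ofReal_ne_top]
  apply lcongr ht
  intro b hb
  rw [cmul _ (h0 a ha)]

lemma K2 (a b : ℝ) (ha : 0 < a) (hb : 0 < b) :
    ∫⁻ t in Ioi (0:ℝ), ENNReal.ofReal (t * (K0 (a * t) * K0 (b * t)))
      = ∫⁻ s in Ioi (0:ℝ), ENNReal.ofReal (s / ((s ^ 2 + a ^ 2) * (s ^ 2 + b ^ 2))) := by
  have h4 : 4 * ∫⁻ t in Ioi (0:ℝ), ENNReal.ofReal (t * (K0 (a * t) * K0 (b * t)))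
      = 4 * ∫⁻ s in Ioi (0:ℝ), ENNReal.ofReal (s / ((s ^ 2 + a ^ 2) * (s ^ 2 + b ^ 2))) := by
    calc _ = ∫⁻ t in Ioi (0:ℝ), ∫⁻ α in Ioi (0:ℝ), ∫⁻ β in Ioi (0:ℝ),
          ENNReal.ofReal (t * ((α⁻¹ * exp (-(α * a ^ 2 + t ^ 2 / (4 * α))))
            * (β⁻¹ * exp (-(β * b ^ 2 + t ^ 2 / (4 * β)))))) := by
          rw [← lintegral_const_mul' _ _ (by norm_num)]
          apply lcongr measurableSet_Ioi
          intro t ht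
          have ht : 0 < t := ht
          rw [ENNReal.ofReal_mul ht.le, ENNReal.ofReal_mul (K0_nonneg _)]
          rw [show (4:ℝ≥0∞) * (ENNReal.ofReal t * (ENNReal.ofReal (K0 (a * t)) * ENNReal.ofReal (K0 (b * t))))
            = ENNReal.ofReal t * ((2 * ENNReal.ofReal (K0 (a * t))) * (2 * ENNReal.ofReal (K0 (b * t)))) by ring]
          rw [KA a t ha ht, KA b t hb ht, lprod2 measurableSet_Ioi (by fun_prop) (by
            intro x hx
            have hx : 0 < x := hx
            positivity), ← lintegral_const_mul' _ _ ENNReal.ofReal_ne_top]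
          simp only [cmul _ ht.le]
      _ = ∫⁻ α in Ioi (0:ℝ), ∫⁻ β in Ioi (0:ℝ), ∫⁻ t in Ioi (0:ℝ),
          ENNReal.ofReal (t * ((α⁻¹ * exp (-(α * a ^ 2 + t ^ 2 / (4 * α))))
            * (β⁻¹ * exp (-(β * b ^ 2 + t ^ 2 / (4 * β)))))) := lsw3 _ (by fun_prop)
      _ = ∫⁻ α in Ioi (0:ℝ), ∫⁻ β in Ioi (0:ℝ), ∫⁻ s in Ioi (0:ℝ),
          ENNReal.ofReal (4 * s * (exp (-((s ^ 2 + a ^ 2) * α)) * exp (-((s ^ 2 + b ^ 2) * β)))) := by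
          apply lcongr measurableSet_Ioi
          intro α hα
          apply lcongr measurableSet_Ioi
          intro β hβ
          have hα : 0 < α := hα
          have hβ : 0 < β := hβ
          have e1 : ∀ t : ℝ, t * ((α⁻¹ * exp (-(α * a ^ 2 + t ^ 2 / (4 * α))))
            * (β⁻¹ * exp (-(β * b ^ 2 + t ^ 2 / (4 * β)))))
            = (α⁻¹ * β⁻¹ * exp (-(α * a ^ 2 + β * b ^ 2))) * (t * exp (-((α + β) / (4 * α * β) * t ^ 2))) := by
            intro t
            have : exp (-(α * a ^ 2 + t ^ 2 / (4 * α))) * exp (-(β * b ^ 2 + t ^ 2 / (4 * β)))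
              = exp (-(α * a ^ 2 + β * b ^ 2)) * exp (-((α + β) / (4 * α * β) * t ^ 2)) := by
              rw [← exp_add, ← exp_add]; congr 1; field_simp; ring
            linear_combination (t * α⁻¹ * β⁻¹) * this
          have e2 : ∀ s : ℝ, 4 * s * (exp (-((s ^ 2 + a ^ 2) * α)) * exp (-((s ^ 2 + b ^ 2) * β)))
            = (4 * exp (-(α * a ^ 2 + β * b ^ 2))) * (s * exp (-((α + β) * s ^ 2))) := by
            intro s
            have : exp (-((s ^ 2 + a ^ 2) * α)) * exp (-((s ^ 2 + b ^ 2) * β))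
              = exp (-(α * a ^ 2 + β * b ^ 2)) * exp (-((α + β) * s ^ 2)) := by
              rw [← exp_add, ← exp_add]; congr 1; ring
            linear_combination (4 * s) * this
          simp only [e1, e2]
          rw [← cmul _ (by positivity), ← cmul _ (by positivity), lsqexp _ (by positivity), lsqexp _ (by positivity),
            ← ENNReal.ofReal_mul (by positivity), ← ENNReal.ofReal_mul (by positivity)]
          congr 1
          field_simp
          try norm_num
      _ = ∫⁻ s in Ioi (0:ℝ), ∫⁻ α in Ioi (0:ℝ), ∫⁻ β in Ioi (0:ℝ),
          ENNReal.ofReal (4 * s * (exp (-((s ^ 2 + a ^ 2) * α)) * exp (-((s ^ 2 + b ^ 2) * β)))) :=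
          (lsw3 (fun s α β => ENNReal.ofReal (4 * s * (exp (-((s ^ 2 + a ^ 2) * α)) * exp (-((s ^ 2 + b ^ 2) * β)))))
            (by fun_prop)).symm
      _ = _ := by
          rw [← lintegral_const_mul' _ _ (by norm_num)]
          apply lcongr measurableSet_Ioi
          intro s hs
          have hs : 0 < s := hs
          simp only [← cmul (4 * s) (by positivity)]
          rw [lintegral_const_mul' _ _ ENNReal.ofReal_ne_top, ← lprod2 measurableSet_Ioi (by fun_prop)
            (fun x _ => (exp_pos _).le), lexp _ (by positivity), lexp _ (by positivity),
            ← ENNReal.ofReal_mul (by positivity), ← ENNReal.ofReal_mul (by positivity),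
            show (4:ℝ≥0∞) = ENNReal.ofReal 4 by norm_num, ← ENNReal.ofReal_mul (by positivity)]
          congr 1
          field_simp
  exact (ENNReal.mul_right_inj (by norm_num) (by norm_num)).1 h4

lemma e2rep (α β γ : ℝ) (hα : 0 < α) (hβ : 0 < β) (hγ : 0 < γ) :
    ∫⁻ k in Ioi (0:ℝ), ∫⁻ l in Ioi (0:ℝ), ∫⁻ ψ in Ioo (0:ℝ) π,
      ENNReal.ofReal (k * l / π * exp (-(β * k ^ 2 + γ * l ^ 2 + α * (k ^ 2 + l ^ 2 - 2 * k * l * cos ψ))))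
      = ENNReal.ofReal (1 / (4 * (α * β + β * γ + γ * α))) := by
  have e1 : ∀ k ∈ Ioi (0:ℝ), ∫⁻ l in Ioi (0:ℝ), ∫⁻ ψ in Ioo (0:ℝ) π,
      ENNReal.ofReal (k * l / π * exp (-(β * k ^ 2 + γ * l ^ 2 + α * (k ^ 2 + l ^ 2 - 2 * k * l * cos ψ))))
      = ENNReal.ofReal (1 / (2 * (α + γ)) * (k * exp (-((α * β + β * γ + γ * α) / (α + γ) * k ^ 2)))) := by
    intro k hk
    have hk : 0 < k := hk
    have e2 : ∀ l ∈ Ioi (0:ℝ), ∫⁻ ψ in Ioo (0:ℝ) π,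
      ENNReal.ofReal (k * l / π * exp (-(β * k ^ 2 + γ * l ^ 2 + α * (k ^ 2 + l ^ 2 - 2 * k * l * cos ψ))))
      = ENNReal.ofReal ((k * exp (-((α + β) * k ^ 2))) * (l * exp (-((α + γ) * l ^ 2)) * I0 (2 * α * k * l))) := by
      intro l hl
      have hl : 0 < l := hl
      rw [← mul_assoc, ENNReal.ofReal_mul (by positivity), ofReal_I0, ← mul_assoc,
        ← ENNReal.ofReal_mul (by positivity), cmul _ (by positivity)]
      congr 1; ext ψ; congr 1
      rw [show -(β * k ^ 2 + γ * l ^ 2 + α * (k ^ 2 + l ^ 2 - 2 * k * l * cos ψ))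
        = -((α + β) * k ^ 2) + (-((α + γ) * l ^ 2)) + 2 * α * k * l * cos ψ by ring, exp_add, exp_add]
      field_simp
    rw [lcongr measurableSet_Ioi e2, ← cmul _ (by positivity), weber _ _ (by positivity),
      ← ENNReal.ofReal_mul (by positivity)]
    congr 1
    rw [show -((α * β + β * γ + γ * α) / (α + γ) * k ^ 2) = -((α + β) * k ^ 2) + (2 * α * k) ^ 2 / (4 * (α + γ)) by
      field_simp; ring, exp_add]
    ring
  rw [lcongr measurableSet_Ioi e1, ← cmul _ (by positivity), lsqexp _ (by positivity),
    ← ENNReal.ofReal_mul (by positivity)]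
  congr 1
  field_simp
  norm_num

lemma K3 (a b c : ℝ) (ha : 0 < a) (hb : 0 < b) (hc : 0 < c) :
    ∫⁻ t in Ioi (0:ℝ), ENNReal.ofReal (t * (K0 (a * t) * (K0 (b * t) * K0 (c * t))))
      = ∫⁻ k in Ioi (0:ℝ), ∫⁻ l in Ioi (0:ℝ), ∫⁻ ψ in Ioo (0:ℝ) π,
        ENNReal.ofReal (k * l / π * (1 / (a ^ 2 + k ^ 2 + l ^ 2 - 2 * k * l * cos ψ)
          * (1 / (b ^ 2 + k ^ 2) * (1 / (c ^ 2 + l ^ 2))))) := by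
  have h4 : 8 * ∫⁻ t in Ioi (0:ℝ), ENNReal.ofReal (t * (K0 (a * t) * (K0 (b * t) * K0 (c * t))))
      = 8 * ∫⁻ k in Ioi (0:ℝ), ∫⁻ l in Ioi (0:ℝ), ∫⁻ ψ in Ioo (0:ℝ) π,
        ENNReal.ofReal (k * l / π * (1 / (a ^ 2 + k ^ 2 + l ^ 2 - 2 * k * l * cos ψ)
          * (1 / (b ^ 2 + k ^ 2) * (1 / (c ^ 2 + l ^ 2))))) := by
    calc _ = ∫⁻ t in Ioi (0:ℝ), ∫⁻ α in Ioi (0:ℝ), ∫⁻ β in Ioi (0:ℝ), ∫⁻ γ in Ioi (0:ℝ),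
          ENNReal.ofReal (t * ((α⁻¹ * exp (-(α * a ^ 2 + t ^ 2 / (4 * α))))
            * ((β⁻¹ * exp (-(β * b ^ 2 + t ^ 2 / (4 * β))))
            * (γ⁻¹ * exp (-(γ * c ^ 2 + t ^ 2 / (4 * γ))))))) := by
          rw [← lintegral_const_mul' _ _ (by norm_num)]
          apply lcongr measurableSet_Ioi
          intro t ht
          have ht : 0 < t := ht
          rw [ENNReal.ofReal_mul ht.le, ENNReal.ofReal_mul (K0_nonneg _), ENNReal.ofReal_mul (K0_nonneg _)]
          rw [show (8:ℝ≥0∞) * (ENNReal.ofReal t * (ENNReal.ofReal (K0 (a * t)) * (ENNReal.ofReal (K0 (b * t)) * ENNReal.ofReal (K0 (c * t)))))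
            = ENNReal.ofReal t * ((2 * ENNReal.ofReal (K0 (a * t))) * ((2 * ENNReal.ofReal (K0 (b * t))) * (2 * ENNReal.ofReal (K0 (c * t))))) by ring]
          have hp : ∀ d : ℝ, ∀ x ∈ Ioi (0:ℝ), 0 ≤ x⁻¹ * exp (-(x * d ^ 2 + t ^ 2 / (4 * x))) := by
            intro d x hx
            have hx : 0 < x := hx
            positivity
          rw [KA a t ha ht, KA b t hb ht, KA c t hc ht, lprod3 measurableSet_Ioi measurableSet_Ioi
            (by fun_prop) (by fun_prop) (hp a) (hp b), ← lintegral_const_mul' _ _ ENNReal.ofReal_ne_top]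
          simp only [← lintegral_const_mul' _ _ (ENNReal.ofReal_ne_top (r := t)), ← ENNReal.ofReal_mul ht.le]
      _ = ∫⁻ α in Ioi (0:ℝ), ∫⁻ β in Ioi (0:ℝ), ∫⁻ γ in Ioi (0:ℝ), ∫⁻ t in Ioi (0:ℝ),
          ENNReal.ofReal (t * ((α⁻¹ * exp (-(α * a ^ 2 + t ^ 2 / (4 * α))))
            * ((β⁻¹ * exp (-(β * b ^ 2 + t ^ 2 / (4 * β))))
            * (γ⁻¹ * exp (-(γ * c ^ 2 + t ^ 2 / (4 * γ))))))) := lsw4 _ (by fun_prop)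
      _ = ∫⁻ α in Ioi (0:ℝ), ∫⁻ β in Ioi (0:ℝ), ∫⁻ γ in Ioi (0:ℝ), ∫⁻ k in Ioi (0:ℝ), ∫⁻ l in Ioi (0:ℝ), ∫⁻ ψ in Ioo (0:ℝ) π,
          ENNReal.ofReal (8 * exp (-(α * a ^ 2 + β * b ^ 2 + γ * c ^ 2)) * (k * l / π * exp (-(β * k ^ 2 + γ * l ^ 2 + α * (k ^ 2 + l ^ 2 - 2 * k * l * cos ψ))))) := by
          apply lcongr measurableSet_Ioi
          intro α hα
          apply lcongr measurableSet_Ioi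
          intro β hβ
          apply lcongr measurableSet_Ioi
          intro γ hγ
          have hα : 0 < α := hα
          have hβ : 0 < β := hβ
          have hγ : 0 < γ := hγ
          have e1 : ∀ t : ℝ, t * ((α⁻¹ * exp (-(α * a ^ 2 + t ^ 2 / (4 * α))))
            * ((β⁻¹ * exp (-(β * b ^ 2 + t ^ 2 / (4 * β))))
            * (γ⁻¹ * exp (-(γ * c ^ 2 + t ^ 2 / (4 * γ))))))
            = (α⁻¹ * β⁻¹ * γ⁻¹ * exp (-(α * a ^ 2 + β * b ^ 2 + γ * c ^ 2))) * (t * exp (-((α * β + β * γ + γ * α) / (4 * α * β * γ) * t ^ 2))) := by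
            intro t
            have : exp (-(α * a ^ 2 + t ^ 2 / (4 * α))) * (exp (-(β * b ^ 2 + t ^ 2 / (4 * β))) * exp (-(γ * c ^ 2 + t ^ 2 / (4 * γ))))
              = exp (-(α * a ^ 2 + β * b ^ 2 + γ * c ^ 2)) * exp (-((α * β + β * γ + γ * α) / (4 * α * β * γ) * t ^ 2)) := by
              rw [← exp_add, ← exp_add, ← exp_add]; congr 1; field_simp; ring
            linear_combination (t * α⁻¹ * β⁻¹ * γ⁻¹) * this
          simp only [e1]
          simp only [ENNReal.ofReal_mul (show 0 ≤ 8 * exp (-(α * a ^ 2 + β * b ^ 2 + γ * c ^ 2)) by positivity), lintegral_const_mul' _ _ (ENNReal.ofReal_ne_top (r := 8 * exp (-(α * a ^ 2 + β * b ^ 2 + γ * c ^ 2))))]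
          rw [e2rep α β γ hα hβ hγ]
          rw [← cmul _ (by positivity), lsqexp _ (by positivity),
            ← ENNReal.ofReal_mul (by positivity), ← ENNReal.ofReal_mul (by positivity)]
          congr 1
          field_simp
          try norm_num
      _ = ∫⁻ k in Ioi (0:ℝ), ∫⁻ l in Ioi (0:ℝ), ∫⁻ ψ in Ioo (0:ℝ) π, ∫⁻ α in Ioi (0:ℝ), ∫⁻ β in Ioi (0:ℝ), ∫⁻ γ in Ioi (0:ℝ),
          ENNReal.ofReal (8 * exp (-(α * a ^ 2 + β * b ^ 2 + γ * c ^ 2)) * (k * l / π * exp (-(β * k ^ 2 + γ * l ^ 2 + α * (k ^ 2 + l ^ 2 - 2 * k * l * cos ψ))))) :=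
          lsw33 _ (by fun_prop)
      _ = _ := by
          rw [← lintegral_const_mul' _ _ (by norm_num)]
          apply lcongr measurableSet_Ioi
          intro k hk
          rw [← lintegral_const_mul' _ _ (by norm_num)]
          apply lcongr measurableSet_Ioi
          intro l hl
          rw [← lintegral_const_mul' _ _ (by norm_num)]
          apply lcongr measurableSet_Ioo
          intro ψ hψ
          have hk : 0 < k := hk
          have hl : 0 < l := hl
          have hx : 0 < a ^ 2 + k ^ 2 + l ^ 2 - 2 * k * l * cos ψ := by
            nlinarith [sq_nonneg (k - l), cos_le_one ψ, mul_pos hk hl, pow_pos ha 2]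
          have e1 : ∀ α β γ : ℝ, 8 * exp (-(α * a ^ 2 + β * b ^ 2 + γ * c ^ 2)) * (k * l / π * exp (-(β * k ^ 2 + γ * l ^ 2 + α * (k ^ 2 + l ^ 2 - 2 * k * l * cos ψ))))
            = (8 * k * l / π) * (exp (-((a ^ 2 + k ^ 2 + l ^ 2 - 2 * k * l * cos ψ) * α)) * (exp (-((b ^ 2 + k ^ 2) * β)) * exp (-((c ^ 2 + l ^ 2) * γ)))) := by
            intro α β γ
            have : exp (-(α * a ^ 2 + β * b ^ 2 + γ * c ^ 2)) * exp (-(β * k ^ 2 + γ * l ^ 2 + α * (k ^ 2 + l ^ 2 - 2 * k * l * cos ψ)))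
              = exp (-((a ^ 2 + k ^ 2 + l ^ 2 - 2 * k * l * cos ψ) * α)) * (exp (-((b ^ 2 + k ^ 2) * β)) * exp (-((c ^ 2 + l ^ 2) * γ))) := by
              rw [← exp_add, ← exp_add, ← exp_add]; congr 1; ring
            linear_combination (8 * (k * l / π)) * this
          simp only [e1]
          simp only [ENNReal.ofReal_mul (show 0 ≤ 8 * k * l / π by positivity), lintegral_const_mul' _ _ (ENNReal.ofReal_ne_top (r := 8 * k * l / π))]
          rw [← lprod3 measurableSet_Ioi measurableSet_Ioi (by fun_prop) (by fun_prop)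
            (fun x _ => (exp_pos _).le) (fun x _ => (exp_pos _).le), lexp _ hx, lexp _ (by positivity), lexp _ (by positivity),
            ← ENNReal.ofReal_mul (by positivity), ← ENNReal.ofReal_mul (by positivity), ← ENNReal.ofReal_mul (by positivity),
            show (8:ℝ≥0∞) = ENNReal.ofReal 8 by norm_num, ← ENNReal.ofReal_mul (by positivity)]
          congr 1
          ring
  exact (ENNReal.mul_right_inj (by norm_num) (by norm_num)).1 h4

end kk


section achain

noncomputable def FF : ℝ≥0∞ :=
  ∫⁻ T : ℝ, ∫⁻ U : ℝ, ENNReal.ofReal (1 / √((1 + T ^ 2) * (1 + U ^ 2) * (1 + (T - U) ^ 2)))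

lemma cos_lt_one_of {θ : ℝ} (h : θ ∈ Ioo 0 π) : cos θ < 1 := by
  have := cos_lt_cos_of_nonneg_of_le_pi le_rfl h.2.le h.1
  simpa using this

lemma IK_rep (t : ℝ) (ht : 0 < t) :
    ENNReal.ofReal (K0 t * I0 t) = ENNReal.ofReal (1 / π) *
      ∫⁻ θ in Ioo (0:ℝ) π, ENNReal.ofReal (K0 (√(2 - 2 * cos θ) * t)) := by
  rw [graf t t ht le_rfl]
  congr 2; ext θ; congr 2
  rw [show t ^ 2 + t ^ 2 - 2 * t * t * cos θ = (2 - 2 * cos θ) * t ^ 2 by ring,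
    sqrt_mul (by linarith [cos_le_one θ]), sqrt_sq ht.le]

lemma IK2_rep (t C : ℝ) (ht : 0 < t) (hC : 1 ≤ C) :
    ENNReal.ofReal (K0 (2 * t * C) * I0 (2 * t)) = ENNReal.ofReal (1 / π) *
      ∫⁻ θ in Ioo (0:ℝ) π, ENNReal.ofReal (K0 (√(4 * (C ^ 2 + 1 - 2 * C * cos θ)) * t)) := by
  rw [graf (2 * t * C) (2 * t) (by positivity) (by nlinarith)]
  congr 2; ext θ; congr 2
  rw [show (2 * t * C) ^ 2 + (2 * t) ^ 2 - 2 * (2 * t * C) * (2 * t) * cos θ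
    = (4 * (C ^ 2 + 1 - 2 * C * cos θ)) * t ^ 2 by ring,
    sqrt_mul (by nlinarith [cos_le_one θ, sq_nonneg (C - 1)]), sqrt_sq ht.le]

lemma lsinh (f : ℝ → ℝ≥0∞) : ∫⁻ s in Ioi (0:ℝ), f s
    = ∫⁻ u in Ioi (0:ℝ), ENNReal.ofReal (2 * Real.cosh u) * f (2 * Real.sinh u) := by
  rw [subst1 (φ := fun u => 2 * Real.sinh u) (φ' := fun u => 2 * Real.cosh u) (s := Ioi 0) measurableSet_Ioi
    (fun x _ => (Real.hasDerivAt_sinh x).const_mul 2)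
    (bij_of_inv (ψ := fun x => arsinh (x / 2)) (by
      intro x hx
      have := Real.sinh_pos_iff.2 hx
      simp only [mem_Ioi]; positivity) (by
      intro x hx
      have hx : 0 < x := hx
      simp only [mem_Ioi, arsinh_pos_iff]; positivity) (by
      intro x hx
      simp) (by
      intro x hx
      rw [sinh_arsinh]; ring))]
  apply lcongr measurableSet_Ioi
  intro u hu
  have := Real.cosh_pos u
  rw [abs_of_pos (by positivity)]

lemma A1 : ∫⁻ t in Ioi (0:ℝ), ENNReal.ofReal (I0 (2 * t) * I0 t * (K0 t) ^ 3 * t)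
    = 2 * ∫⁻ v in Ioi (0:ℝ), ∫⁻ s in Ioi (0:ℝ), ENNReal.ofReal (1 / √(s ^ 2 + 4) *
      (1 / √((s ^ 2 + 4 * Real.cosh v ^ 2 + 4) ^ 2 - 64 * Real.cosh v ^ 2))) := by
  have mK := K0_meas
  have hCpos : ∀ C ψ : ℝ, 1 ≤ C → ψ ∈ Ioo 0 π → 0 < 4 * (C ^ 2 + 1 - 2 * C * cos ψ) := by
    intro C ψ hC hψ
    nlinarith [cos_lt_one_of hψ, sq_nonneg (C - 1)]
  calc _ = ∫⁻ t in Ioi (0:ℝ), ∫⁻ v in Ioi (0:ℝ), ∫⁻ θ in Ioo (0:ℝ) π, ∫⁻ ψ in Ioo (0:ℝ) π,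
        ENNReal.ofReal (2 / π ^ 2 * (t * (K0 (√(2 - 2 * cos θ) * t)
          * K0 (√(4 * (Real.cosh v ^ 2 + 1 - 2 * Real.cosh v * cos ψ)) * t)))) := by
        apply lcongr measurableSet_Ioi
        intro t ht
        have ht : 0 < t := ht
        have hI := I0_nonneg t
        have hI2 := I0_nonneg (2 * t)
        have hK := K0_nonneg t
        rw [show I0 (2 * t) * I0 t * (K0 t) ^ 3 * t = t * I0 (2 * t) * (K0 t * I0 t) * K0 t ^ 2 by ring,
          ENNReal.ofReal_mul (by positivity), K0_sq t ht, mul_left_comm, ← lintegral_const_mul' _ _ ENNReal.ofReal_ne_top,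
          ← lintegral_const_mul' _ _ (by norm_num)]
        apply lcongr measurableSet_Ioi
        intro v hv
        have hC := Real.one_le_cosh v
        have hKv := K0_nonneg (2 * t * Real.cosh v)
        rw [← ENNReal.ofReal_mul (by positivity),
          show t * I0 (2 * t) * (K0 t * I0 t) * K0 (2 * t * Real.cosh v)
            = t * ((K0 t * I0 t) * (K0 (2 * t * Real.cosh v) * I0 (2 * t))) by ring,
          ENNReal.ofReal_mul ht.le, ENNReal.ofReal_mul (by positivity), IK_rep t ht, IK2_rep t _ ht hC,
          mul_mul_mul_comm, lprod2 measurableSet_Ioo (by fun_prop) (fun _ _ => K0_nonneg _),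
          ← ENNReal.ofReal_mul (by positivity), ← mul_assoc, ← mul_assoc,
          show (2:ℝ≥0∞) = ENNReal.ofReal 2 by norm_num, ← ENNReal.ofReal_mul (by positivity),
          ← ENNReal.ofReal_mul (by positivity), ← lintegral_const_mul' _ _ ENNReal.ofReal_ne_top]
        apply lcongr measurableSet_Ioo
        intro θ hθ
        rw [cmul _ (by positivity)]
        congr 1; ext ψ; congr 1
        ring
    _ = ∫⁻ v in Ioi (0:ℝ), ∫⁻ θ in Ioo (0:ℝ) π, ∫⁻ ψ in Ioo (0:ℝ) π, ∫⁻ t in Ioi (0:ℝ),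
        ENNReal.ofReal (2 / π ^ 2 * (t * (K0 (√(2 - 2 * cos θ) * t)
          * K0 (√(4 * (Real.cosh v ^ 2 + 1 - 2 * Real.cosh v * cos ψ)) * t)))) := lsw4 _ (by fun_prop)
    _ = ∫⁻ v in Ioi (0:ℝ), ∫⁻ θ in Ioo (0:ℝ) π, ∫⁻ ψ in Ioo (0:ℝ) π, ∫⁻ s in Ioi (0:ℝ),
        ENNReal.ofReal (2 / π ^ 2 * s * (1 / ((s ^ 2 + 2) - 2 * cos θ)
          * (1 / ((s ^ 2 + 4 * Real.cosh v ^ 2 + 4) - 8 * Real.cosh v * cos ψ)))) := by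
        apply lcongr measurableSet_Ioi
        intro v hv
        apply lcongr measurableSet_Ioo
        intro θ hθ
        apply lcongr measurableSet_Ioo
        intro ψ hψ
        have h1 := hCpos _ _ (Real.one_le_cosh v) hψ
        have h2 : 0 < 2 - 2 * cos θ := by linarith [cos_lt_one_of hθ]
        rw [← cmul _ (by positivity), K2 _ _ (sqrt_pos.2 h2) (sqrt_pos.2 h1), cmul _ (by positivity)]
        rw [sq_sqrt h1.le, sq_sqrt h2.le]
        congr 1; ext s; congr 1
        rw [show (s ^ 2 + 4 * Real.cosh v ^ 2 + 4) - 8 * Real.cosh v * cos ψ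
          = s ^ 2 + 4 * (Real.cosh v ^ 2 + 1 - 2 * Real.cosh v * cos ψ) by ring,
          show (s ^ 2 + 2) - 2 * cos θ = s ^ 2 + (2 - 2 * cos θ) by ring]
        have : 0 < s ^ 2 + 4 * (Real.cosh v ^ 2 + 1 - 2 * Real.cosh v * cos ψ) := by positivity
        have : 0 < s ^ 2 + (2 - 2 * cos θ) := by positivity
        field_simp
    _ = ∫⁻ v in Ioi (0:ℝ), ∫⁻ s in Ioi (0:ℝ), ∫⁻ θ in Ioo (0:ℝ) π, ∫⁻ ψ in Ioo (0:ℝ) π,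
        ENNReal.ofReal (2 / π ^ 2 * s * (1 / ((s ^ 2 + 2) - 2 * cos θ)
          * (1 / ((s ^ 2 + 4 * Real.cosh v ^ 2 + 4) - 8 * Real.cosh v * cos ψ)))) := by
        apply lcongr measurableSet_Ioi
        intro v hv
        rw [lsw3 (fun s θ ψ => ENNReal.ofReal (2 / π ^ 2 * s * (1 / ((s ^ 2 + 2) - 2 * cos θ)
          * (1 / ((s ^ 2 + 4 * Real.cosh v ^ 2 + 4) - 8 * Real.cosh v * cos ψ)))))  (by fun_prop)]
    _ = _ := by
        rw [← lintegral_const_mul' _ _ (by norm_num)]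
        apply lcongr measurableSet_Ioi
        intro v hv
        rw [← lintegral_const_mul' _ _ (by norm_num)]
        apply lcongr measurableSet_Ioi
        intro s hs
        have hs : 0 < s := hs
        have hC := Real.one_le_cosh v
        simp only [← cmul (2 / π ^ 2 * s) (by positivity)]
        rw [lintegral_const_mul' _ _ ENNReal.ofReal_ne_top, ← lprod2 measurableSet_Ioo (by fun_prop) (fun θ _ => by
          have := cos_le_one θ
          have : 0 < s ^ 2 + 2 - 2 * cos θ := by nlinarith
          positivity), langle _ _ (by norm_num) (by nlinarith), langle _ _ (by positivity)
            (by nlinarith [sq_nonneg (Real.cosh v - 1)]), ← ENNReal.ofReal_mul (by positivity),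
            ← ENNReal.ofReal_mul (by positivity), show (2:ℝ≥0∞) = ENNReal.ofReal 2 by norm_num,
            ← ENNReal.ofReal_mul (by positivity)]
        congr 1
        rw [show (s ^ 2 + 2) ^ 2 - 2 ^ 2 = s ^ 2 * (s ^ 2 + 4) by ring, sqrt_mul (by positivity), sqrt_sq hs.le,
          show (8 * Real.cosh v) ^ 2 = 64 * Real.cosh v ^ 2 by ring]
        field_simp

lemma A2 : 16 * ∫⁻ t in Ioi (0:ℝ), ENNReal.ofReal (I0 (2 * t) * I0 t * (K0 t) ^ 3 * t)
    = ∫⁻ x : ℝ, ∫⁻ y : ℝ, ENNReal.ofReal (1 / √((Real.sinh x + Real.sinh y) ^ 2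
      + Real.sinh x ^ 2 * Real.sinh y ^ 2)) := by
  set g : ℝ → ℝ → ℝ≥0∞ := fun v u => ENNReal.ofReal
    (1 / √((Real.cosh u ^ 2 + Real.cosh v ^ 2) ^ 2 - 4 * Real.cosh v ^ 2)) with hg
  have gm : Measurable fun p : ℝ × ℝ => g p.1 p.2 := by simp only [hg]; fun_prop
  have e1 : 2 * ∫⁻ t in Ioi (0:ℝ), ENNReal.ofReal (I0 (2 * t) * I0 t * (K0 t) ^ 3 * t)
      = ∫⁻ v in Ioi (0:ℝ), ∫⁻ u in Ioi (0:ℝ), g v u := by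
    rw [A1, ← lintegral_const_mul' _ _ (by norm_num), ← lintegral_const_mul' _ _ (by norm_num)]
    apply lcongr measurableSet_Ioi
    intro v hv
    rw [lsinh, ← lintegral_const_mul' _ _ (by norm_num), ← lintegral_const_mul' _ _ (by norm_num)]
    apply lcongr measurableSet_Ioi
    intro u hu
    have hc := Real.cosh_pos u
    rw [← ENNReal.ofReal_mul (by positivity), show (2:ℝ≥0∞) = ENNReal.ofReal 2 by norm_num,
            ← ENNReal.ofReal_mul (by positivity), ← ENNReal.ofReal_mul (by positivity)]
    simp only [hg]
    congr 1
    rw [show (2 * Real.sinh u) ^ 2 + 4 = (2 * Real.cosh u) ^ 2 by rw [mul_pow, mul_pow, Real.cosh_sq]; ring,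
      sqrt_sq (by positivity), show ((2 * Real.sinh u) ^ 2 + 4 * Real.cosh v ^ 2 + 4) ^ 2 - 64 * Real.cosh v ^ 2
        = 4 ^ 2 * ((Real.cosh u ^ 2 + Real.cosh v ^ 2) ^ 2 - 4 * Real.cosh v ^ 2) by
          rw [Real.cosh_sq u]; ring, sqrt_mul (by positivity), sqrt_sq (by norm_num)]
    field_simp
    norm_num
  have e2 : ∫⁻ v, ∫⁻ u, g v u = 4 * ∫⁻ v in Ioi (0:ℝ), ∫⁻ u in Ioi (0:ℝ), g v u := by
    rw [leven _ (Measurable.lintegral_prod_right' gm) (by intro v; simp [hg])]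
    have : ∀ v, ∫⁻ u, g v u = 2 * ∫⁻ u in Ioi (0:ℝ), g v u := fun v =>
      leven _ (by simp only [hg]; fun_prop) (by simp [hg])
    simp only [this]
    rw [lintegral_const_mul' _ _ (by norm_num), ← mul_assoc]
    norm_num
  rw [lrot _ (by unfold Function.uncurry; fun_prop)]
  have e3 : ∫⁻ a : ℝ, ∫⁻ b : ℝ, ENNReal.ofReal (1 / √((Real.sinh (a + b) + Real.sinh (a - b)) ^ 2
      + Real.sinh (a + b) ^ 2 * Real.sinh (a - b) ^ 2)) = ∫⁻ v, ∫⁻ u, g v u := by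
    rw [lsw2 g gm]
    congr 1; ext a; congr 1; ext b
    simp only [hg]
    congr 3
    rw [Real.sinh_add, Real.sinh_sub]
    have h1 := Real.cosh_sq a
    have h2 := Real.cosh_sq b
    have : Real.sinh b ^ 2 = Real.cosh b ^ 2 - 1 := by linarith
    have h4 : Real.sinh a ^ 2 = Real.cosh a ^ 2 - 1 := by linarith
    rw [show (Real.sinh a * Real.cosh b + Real.cosh a * Real.sinh b) ^ 2 * (Real.sinh a * Real.cosh b - Real.cosh a * Real.sinh b) ^ 2
      = (Real.sinh a ^ 2 * Real.cosh b ^ 2 - Real.cosh a ^ 2 * Real.sinh b ^ 2) ^ 2 by ring,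
      show (Real.sinh a * Real.cosh b + Real.cosh a * Real.sinh b + (Real.sinh a * Real.cosh b - Real.cosh a * Real.sinh b)) ^ 2
      = 4 * Real.sinh a ^ 2 * Real.cosh b ^ 2 by ring, this, h4]
    ring
  rw [e3, e2, ← e1]
  ring

lemma linvsinh (f : ℝ → ℝ≥0∞) : ∫⁻ T, f T
    = ∫⁻ x, ENNReal.ofReal (Real.cosh x / Real.sinh x ^ 2) * f (Real.sinh x)⁻¹ := by
  have h := subst1 (φ := fun x => (Real.sinh x)⁻¹) (φ' := fun x => - Real.cosh x / Real.sinh x ^ 2)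
    (s := {0}ᶜ) (t := {0}ᶜ) (measurableSet_singleton _).compl
    (fun x hx => (Real.hasDerivAt_sinh x).fun_inv (by simpa using hx))
    (bij_of_inv (ψ := fun x => arsinh (x⁻¹)) (by
      intro x hx
      simpa using hx) (by
      intro x hx
      simpa using hx) (by
      intro x hx
      simp) (by
      intro x hx
      simp)) f
  rw [restrict_compl_singleton] at h
  rw [h]
  congr 1; ext x
  have := Real.cosh_pos x
  rw [neg_div, abs_neg, abs_of_nonneg (by positivity)]

lemma A3 : 16 * ∫⁻ t in Ioi (0:ℝ), ENNReal.ofReal (I0 (2 * t) * I0 t * (K0 t) ^ 3 * t) = FF := by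
  rw [A2, FF]
  symm
  rw [linvsinh]
  have hae : ∀ᵐ x : ℝ, x ≠ 0 := by
    have := (measure_eq_zero_iff_ae_notMem.1 (measure_singleton (0:ℝ)) : ∀ᵐ x : ℝ, x ∉ ({0} : Set ℝ))
    simpa using this
  apply lintegral_congr_ae
  filter_upwards [hae] with x hx
  rw [lscale (-1) (by norm_num), linvsinh, ← lintegral_const_mul' _ _ ENNReal.ofReal_ne_top,
    ← lintegral_const_mul' _ _ ENNReal.ofReal_ne_top]
  apply lintegral_congr_ae
  filter_upwards [hae] with y hy
  have hcx := Real.cosh_pos x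
  have hcy := Real.cosh_pos y
  have hsx : Real.sinh x ≠ 0 := by simpa using hx
  have hsy : Real.sinh y ≠ 0 := by simpa using hy
  rw [abs_neg, abs_one, ENNReal.ofReal_one, one_mul, ← ENNReal.ofReal_mul (by positivity), ← ENNReal.ofReal_mul (by positivity)]
  congr 1
  rw [show (1 + (Real.sinh x)⁻¹ ^ 2) * (1 + (-1 * (Real.sinh y)⁻¹) ^ 2) * (1 + ((Real.sinh x)⁻¹ - -1 * (Real.sinh y)⁻¹) ^ 2)
    = (Real.cosh x * Real.cosh y / (Real.sinh x ^ 2 * Real.sinh y ^ 2)) ^ 2 * ((Real.sinh x + Real.sinh y) ^ 2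
      + Real.sinh x ^ 2 * Real.sinh y ^ 2) by
      field_simp
      rw [Real.cosh_sq x, Real.cosh_sq y]
      ring, sqrt_mul (by positivity), sqrt_sq (by positivity)]
  have h0 : 0 < (Real.sinh x + Real.sinh y) ^ 2 + Real.sinh x ^ 2 * Real.sinh y ^ 2 := by positivity
  field_simp

end achain


section bchain

noncomputable def BB : ℝ≥0∞ :=
  ∫⁻ t in Ioi (0:ℝ), ENNReal.ofReal (K0 (2 * t) * (I0 t) ^ 2 * (K0 t) ^ 2 * t)

lemma lsw23 {ν ρ σ τ υ : Measure ℝ} [SFinite ν] [SFinite ρ] [SFinite σ] [SFinite τ] [SFinite υ]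
    (f : ℝ → ℝ → ℝ → ℝ → ℝ → ℝ≥0∞)
    (hf : Measurable fun p : ℝ × ℝ × ℝ × ℝ × ℝ => f p.1 p.2.1 p.2.2.1 p.2.2.2.1 p.2.2.2.2) :
    ∫⁻ b, ∫⁻ c, ∫⁻ x, ∫⁻ y, ∫⁻ z, f b c x y z ∂υ ∂τ ∂σ ∂ρ ∂ν
      = ∫⁻ x, ∫⁻ y, ∫⁻ z, ∫⁻ b, ∫⁻ c, f b c x y z ∂ρ ∂ν ∂υ ∂τ ∂σ := by
  have := lsw33 (μ := Measure.dirac 0) (ν := ν) (ρ := ρ) (σ := σ) (τ := τ) (υ := υ)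
    (fun _ b c x y z => f b c x y z) (hf.comp measurable_snd)
  simpa using this

lemma B1 : BB = ∫⁻ k in Ioi (0:ℝ), ∫⁻ l in Ioi (0:ℝ), ENNReal.ofReal (1 / √(k ^ 2 + 4) *
      (1 / √(l ^ 2 + 4)) * (1 / √((4 + k ^ 2 + l ^ 2) ^ 2 - (2 * k * l) ^ 2))) := by
  have mK := K0_meas
  calc BB = ∫⁻ t in Ioi (0:ℝ), ∫⁻ θ in Ioo (0:ℝ) π, ∫⁻ ψ in Ioo (0:ℝ) π,
        ENNReal.ofReal (1 / π ^ 2 * (t * (K0 (2 * t) * (K0 (√(2 - 2 * cos θ) * t) * K0 (√(2 - 2 * cos ψ) * t))))) := by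
        apply lcongr measurableSet_Ioi
        intro t ht
        have ht : 0 < t := ht
        have hI := I0_nonneg t
        have hK := K0_nonneg t
        have hK2 := K0_nonneg (2 * t)
        rw [show K0 (2 * t) * (I0 t) ^ 2 * (K0 t) ^ 2 * t = (t * K0 (2 * t)) * ((K0 t * I0 t) * (K0 t * I0 t)) by ring,
          ENNReal.ofReal_mul (by positivity), ENNReal.ofReal_mul (q := K0 t * I0 t) (by positivity), IK_rep t ht,
          mul_mul_mul_comm, lprod2 measurableSet_Ioo (by fun_prop) (fun _ _ => K0_nonneg _),
          ← ENNReal.ofReal_mul (by positivity), ← mul_assoc, 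
          ← ENNReal.ofReal_mul (by positivity), ← lintegral_const_mul' _ _ ENNReal.ofReal_ne_top]
        apply lcongr measurableSet_Ioo
        intro θ hθ
        rw [cmul _ (by positivity)]
        congr 1; ext ψ; congr 1
        ring
    _ = ∫⁻ θ in Ioo (0:ℝ) π, ∫⁻ ψ in Ioo (0:ℝ) π, ∫⁻ t in Ioi (0:ℝ),
        ENNReal.ofReal (1 / π ^ 2 * (t * (K0 (2 * t) * (K0 (√(2 - 2 * cos θ) * t) * K0 (√(2 - 2 * cos ψ) * t))))) :=
        lsw3 _ (by fun_prop)
    _ = ∫⁻ θ in Ioo (0:ℝ) π, ∫⁻ ψ in Ioo (0:ℝ) π, ∫⁻ k in Ioi (0:ℝ), ∫⁻ l in Ioi (0:ℝ), ∫⁻ χ in Ioo (0:ℝ) π,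
        ENNReal.ofReal (k * l / π ^ 3 * (1 / ((4 + k ^ 2 + l ^ 2) - 2 * k * l * cos χ)
          * (1 / ((k ^ 2 + 2) - 2 * cos θ) * (1 / ((l ^ 2 + 2) - 2 * cos ψ))))) := by
        apply lcongr measurableSet_Ioo
        intro θ hθ
        apply lcongr measurableSet_Ioo
        intro ψ hψ
        have h1 : 0 < 2 - 2 * cos ψ := by linarith [cos_lt_one_of hψ]
        have h2 : 0 < 2 - 2 * cos θ := by linarith [cos_lt_one_of hθ]
        rw [← cmul _ (by positivity), K3 _ _ _ (by norm_num) (sqrt_pos.2 h2) (sqrt_pos.2 h1),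
          ← lintegral_const_mul' _ _ ENNReal.ofReal_ne_top]
        rw [sq_sqrt h1.le, sq_sqrt h2.le]
        congr 1; ext k
        rw [← lintegral_const_mul' _ _ ENNReal.ofReal_ne_top]
        congr 1; ext l
        rw [cmul _ (by positivity)]
        congr 1; ext χ; congr 1
        rw [show (k ^ 2 + 2) - 2 * cos θ = 2 - 2 * cos θ + k ^ 2 by ring,
          show (l ^ 2 + 2) - 2 * cos ψ = 2 - 2 * cos ψ + l ^ 2 by ring]
        ring
    _ = ∫⁻ k in Ioi (0:ℝ), ∫⁻ l in Ioi (0:ℝ), ∫⁻ χ in Ioo (0:ℝ) π, ∫⁻ θ in Ioo (0:ℝ) π, ∫⁻ ψ in Ioo (0:ℝ) π,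
        ENNReal.ofReal (k * l / π ^ 3 * (1 / ((4 + k ^ 2 + l ^ 2) - 2 * k * l * cos χ)
          * (1 / ((k ^ 2 + 2) - 2 * cos θ) * (1 / ((l ^ 2 + 2) - 2 * cos ψ))))) := lsw23 _ (by fun_prop)
    _ = _ := by
        apply lcongr measurableSet_Ioi
        intro k hk
        apply lcongr measurableSet_Ioi
        intro l hl
        have hk : 0 < k := hk
        have hl : 0 < l := hl
        simp only [ENNReal.ofReal_mul (show 0 ≤ k * l / π ^ 3 by positivity),
          lintegral_const_mul' _ _ (ENNReal.ofReal_ne_top (r := k * l / π ^ 3))]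
        have hx : ∀ χ : ℝ, 0 < 4 + k ^ 2 + l ^ 2 - 2 * k * l * cos χ := fun χ => by
            nlinarith [sq_nonneg (k - l), cos_le_one χ, mul_pos hk hl]
        rw [← lprod3 measurableSet_Ioo measurableSet_Ioo (by fun_prop) (by fun_prop) (fun χ _ => by
            have := hx χ
            positivity) (fun θ _ => by
            have := cos_le_one θ
            have : 0 < k ^ 2 + 2 - 2 * cos θ := by nlinarith
            positivity), langle _ _ (by positivity) (by nlinarith [sq_nonneg (k - l)]),
            langle _ _ (by norm_num) (by nlinarith), langle _ _ (by norm_num) (by nlinarith), ← ENNReal.ofReal_mul (by positivity),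
            ← ENNReal.ofReal_mul (by positivity), ← ENNReal.ofReal_mul (by positivity)]
        congr 1
        rw [show (k ^ 2 + 2) ^ 2 - 2 ^ 2 = k ^ 2 * (k ^ 2 + 4) by ring, sqrt_mul (by positivity), sqrt_sq hk.le,
          show (l ^ 2 + 2) ^ 2 - 2 ^ 2 = l ^ 2 * (l ^ 2 + 4) by ring, sqrt_mul (by positivity), sqrt_sq hl.le]
        field_simp

lemma B2 : 8 * BB = ∫⁻ x in Ioi (0:ℝ), ∫⁻ y in Ioi (0:ℝ), ENNReal.ofReal
    (1 / √(Real.cosh x ^ 2 * Real.cosh y ^ 2 - (Real.cosh x - Real.cosh y) ^ 2)) := by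
  have four : ∀ (g : ℝ → ℝ → ℝ≥0∞), (Measurable fun p : ℝ × ℝ => g p.1 p.2) → (∀ x y, g (-x) y = g x y) →
      (∀ x y, g x (-y) = g x y) → ∫⁻ v, ∫⁻ u, g v u = 4 * ∫⁻ v in Ioi (0:ℝ), ∫⁻ u in Ioi (0:ℝ), g v u := by
    intro g gm h1 h2
    rw [leven _ (Measurable.lintegral_prod_right' gm) (by intro v; simp [h1])]
    have : ∀ v, ∫⁻ u, g v u = 2 * ∫⁻ u in Ioi (0:ℝ), g v u := fun v =>
      leven _ (gm.comp measurable_prodMk_left) (by simp [h2])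
    simp only [this]
    rw [lintegral_const_mul' _ _ (by norm_num), ← mul_assoc]
    norm_num
  set g : ℝ → ℝ → ℝ≥0∞ := fun u v => ENNReal.ofReal
    (1 / √((1 + Real.sinh u ^ 2 + Real.sinh v ^ 2) ^ 2 - 4 * Real.sinh u ^ 2 * Real.sinh v ^ 2)) with hg
  have gm : Measurable fun p : ℝ × ℝ => g p.1 p.2 := by simp only [hg]; fun_prop
  have e1 : 4 * BB = ∫⁻ v in Ioi (0:ℝ), ∫⁻ u in Ioi (0:ℝ), g v u := by
    rw [B1, lsinh, ← lintegral_const_mul' _ _ (by norm_num)]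
    apply lcongr measurableSet_Ioi
    intro v hv
    rw [lsinh, ← lintegral_const_mul' _ _ ENNReal.ofReal_ne_top, ← lintegral_const_mul' _ _ (by norm_num)]
    apply lcongr measurableSet_Ioi
    intro u hu
    have hc := Real.cosh_pos u
    have hcv := Real.cosh_pos v
    rw [← ENNReal.ofReal_mul (by positivity), show (4:ℝ≥0∞) = ENNReal.ofReal 4 by norm_num,
            ← ENNReal.ofReal_mul (by positivity), ← ENNReal.ofReal_mul (by positivity)]
    simp only [hg]
    congr 1
    rw [show (2 * Real.sinh u) ^ 2 + 4 = (2 * Real.cosh u) ^ 2 by rw [mul_pow, mul_pow, Real.cosh_sq]; ring,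
      sqrt_sq (by positivity), show (2 * Real.sinh v) ^ 2 + 4 = (2 * Real.cosh v) ^ 2 by rw [mul_pow, mul_pow, Real.cosh_sq]; ring,
      sqrt_sq (by positivity), show (4 + (2 * Real.sinh v) ^ 2 + (2 * Real.sinh u) ^ 2) ^ 2 - (2 * (2 * Real.sinh v) * (2 * Real.sinh u)) ^ 2
        = 4 ^ 2 * ((1 + Real.sinh v ^ 2 + Real.sinh u ^ 2) ^ 2 - 4 * Real.sinh v ^ 2 * Real.sinh u ^ 2) by
          ring, sqrt_mul (by positivity), sqrt_sq (by norm_num)]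
    field_simp
  have e2 := four g gm (by simp [hg]) (by simp [hg])
  have e4 := four (fun x y => ENNReal.ofReal
    (1 / √(Real.cosh x ^ 2 * Real.cosh y ^ 2 - (Real.cosh x - Real.cosh y) ^ 2))) (by fun_prop) (by simp) (by simp)
  have e3 : ∫⁻ a : ℝ, ∫⁻ b : ℝ, ENNReal.ofReal (1 / √(Real.cosh (a + b) ^ 2 * Real.cosh (a - b) ^ 2 - (Real.cosh (a + b) - Real.cosh (a - b)) ^ 2)) = ∫⁻ v, ∫⁻ u, g v u := by
    congr 1; ext a; congr 1; ext b
    simp only [hg]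
    congr 3
    rw [Real.cosh_add, Real.cosh_sub]
    have h1 := Real.cosh_sq a
    have h2 := Real.cosh_sq b
    rw [show (Real.cosh a * Real.cosh b + Real.sinh a * Real.sinh b) ^ 2 * (Real.cosh a * Real.cosh b - Real.sinh a * Real.sinh b) ^ 2
      = (Real.cosh a ^ 2 * Real.cosh b ^ 2 - Real.sinh a ^ 2 * Real.sinh b ^ 2) ^ 2 by ring, h1, h2]
    ring
  rw [lrot _ (by unfold Function.uncurry; fun_prop), e3, e2, ← e1] at e4
  have : 4 * (8 * BB) = 4 * ∫⁻ x in Ioi (0:ℝ), ∫⁻ y in Ioi (0:ℝ), ENNReal.ofReal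
    (1 / √(Real.cosh x ^ 2 * Real.cosh y ^ 2 - (Real.cosh x - Real.cosh y) ^ 2)) := by
    rw [← e4]; ring
  exact (ENNReal.mul_right_inj (by norm_num) (by norm_num)).1 this

noncomputable def hf (T U : ℝ) : ℝ := 1 / √((1 - T ^ 2) * (1 - U ^ 2) * (1 - (T - U) ^ 2))

lemma hf_meas : Measurable fun p : ℝ × ℝ => hf p.1 p.2 := by
  unfold hf; fun_prop

lemma linvcosh (f : ℝ → ℝ≥0∞) : ∫⁻ T in Ioo (0:ℝ) 1, f T
    = ∫⁻ x in Ioi (0:ℝ), ENNReal.ofReal (Real.sinh x / Real.cosh x ^ 2) * f (Real.cosh x)⁻¹ := by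
  rw [subst1 (φ := fun x => (Real.cosh x)⁻¹) (φ' := fun x => - Real.sinh x / Real.cosh x ^ 2)
    (s := Ioi 0) (t := Ioo 0 1) measurableSet_Ioi
    (fun x hx => (Real.hasDerivAt_cosh x).fun_inv (Real.cosh_pos x).ne')
    (bij_of_inv (ψ := fun x => arsinh (√(1 / x ^ 2 - 1))) (by
      intro x hx
      have h1 : 1 < Real.cosh x := Real.one_lt_cosh.2 (ne_of_gt hx)
      exact ⟨by positivity, inv_lt_one_of_one_lt₀ h1⟩) (by
      intro x hx
      have h1 : 1 < 1 / x ^ 2 := by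
        rw [lt_div_iff₀ (pow_pos hx.1 2)]
        nlinarith [hx.1, hx.2]
      simp only [mem_Ioi, arsinh_pos_iff]
      exact sqrt_pos.2 (by linarith)) (by
      intro x hx
      have hs := Real.sinh_pos_iff.2 hx
      rw [show 1 / (Real.cosh x)⁻¹ ^ 2 - 1 = Real.sinh x ^ 2 by
        rw [inv_pow, one_div, inv_inv, Real.cosh_sq]; ring, sqrt_sq hs.le, arsinh_sinh]) (by
      intro x hx
      have h1 : 1 < 1 / x ^ 2 := by
        rw [lt_div_iff₀ (pow_pos hx.1 2)]
        nlinarith [hx.1, hx.2]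
      have h2 := Real.cosh_sq (arsinh (√(1 / x ^ 2 - 1)))
      rw [sinh_arsinh, sq_sqrt (by linarith)] at h2
      have h3 : Real.cosh (arsinh (√(1 / x ^ 2 - 1))) = 1 / x := by
        have hx0 := hx.1
        rw [← sqrt_sq (Real.cosh_pos (arsinh (√(1 / x ^ 2 - 1)))).le, h2, sub_add_cancel, ← one_div_pow, sqrt_sq (by positivity)]
      rw [h3]; simp)) f]
  apply lcongr measurableSet_Ioi
  intro x hx
  have hs := Real.sinh_pos_iff.2 hx
  rw [neg_div, abs_neg, abs_of_nonneg (by positivity)]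

lemma B3 : 8 * BB = ∫⁻ T in Ioo (0:ℝ) 1, ∫⁻ U in Ioo (0:ℝ) 1, ENNReal.ofReal (hf T U) := by
  rw [B2, linvcosh]
  apply lcongr measurableSet_Ioi
  intro x hx
  rw [linvcosh, ← lintegral_const_mul' _ _ ENNReal.ofReal_ne_top]
  apply lcongr measurableSet_Ioi
  intro y hy
  have hcx := Real.cosh_pos x
  have hcy := Real.cosh_pos y
  have hsx := Real.sinh_pos_iff.2 hx
  have hsy := Real.sinh_pos_iff.2 hy
  rw [← ENNReal.ofReal_mul (by positivity), ← ENNReal.ofReal_mul (by positivity)]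
  congr 1
  unfold hf
  rw [show (1 - (Real.cosh x)⁻¹ ^ 2) * (1 - (Real.cosh y)⁻¹ ^ 2) * (1 - ((Real.cosh x)⁻¹ - (Real.cosh y)⁻¹) ^ 2)
    = (Real.sinh x * Real.sinh y / (Real.cosh x ^ 2 * Real.cosh y ^ 2)) ^ 2 *
      (Real.cosh x ^ 2 * Real.cosh y ^ 2 - (Real.cosh x - Real.cosh y) ^ 2) by
      rw [div_pow, mul_pow, Real.sinh_sq x, Real.sinh_sq y]
      field_simp
      ring, sqrt_mul (by positivity), sqrt_sq (by positivity)]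
  field_simp

end bchain

section hexagon

lemma lreg {s s' : Set ℝ} {a b : ℝ → Set ℝ} (hs : MeasurableSet s) (hs' : MeasurableSet s')
    (ha : ∀ x, MeasurableSet (a x)) (hb : ∀ x, MeasurableSet (b x))
    (hS : MeasurableSet {p : ℝ × ℝ | p.1 ∈ s ∧ p.2 ∈ a p.1})
    (h : ∀ x y, (x ∈ s ∧ y ∈ a x) ↔ (y ∈ s' ∧ x ∈ b y)) (f : ℝ → ℝ → ℝ≥0∞)
    (hf : Measurable fun p : ℝ × ℝ => f p.1 p.2) :
    ∫⁻ x in s, ∫⁻ y in a x, f x y = ∫⁻ y in s', ∫⁻ x in b y, f x y := by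
  have h1 : ∫⁻ x in s, ∫⁻ y in a x, f x y = ∫⁻ x, ∫⁻ y,
      {p : ℝ × ℝ | p.1 ∈ s ∧ p.2 ∈ a p.1}.indicator (fun p => f p.1 p.2) (x, y) := by
    rw [← lintegral_indicator hs]
    congr 1; ext x
    by_cases hx : x ∈ s
    · rw [indicator_of_mem hx, ← lintegral_indicator (ha x)]
      congr 1; ext y
      by_cases hy : y ∈ a x <;> simp [indicator, hx, hy]
    · simp [indicator, hx]
  have h2 : ∫⁻ y in s', ∫⁻ x in b y, f x y = ∫⁻ y, ∫⁻ x,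
      {p : ℝ × ℝ | p.1 ∈ s ∧ p.2 ∈ a p.1}.indicator (fun p => f p.1 p.2) (x, y) := by
    rw [← lintegral_indicator hs']
    congr 1; ext y
    by_cases hx : y ∈ s'
    · rw [indicator_of_mem hx, ← lintegral_indicator (hb y)]
      congr 1; ext x
      by_cases hy : x ∈ b y <;> simp [indicator, hx, hy, h]
    · simp [indicator, hx, h]
  rw [h1, h2]
  exact lsw2 (fun x y => {p : ℝ × ℝ | p.1 ∈ s ∧ p.2 ∈ a p.1}.indicator (fun p => f p.1 p.2) (x, y))
    (hf.indicator hS)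

lemma lcut {a b c : ℝ} (h1 : a < b) (h2 : b < c) (f : ℝ → ℝ≥0∞) :
    ∫⁻ x in Ioo a c, f x = (∫⁻ x in Ioo a b, f x) + ∫⁻ x in Ioo b c, f x := by
  rw [setLIntegral_congr (Ioo_ae_eq_Ioc (a := a) (b := b)), ← lintegral_union measurableSet_Ioo
    (by rw [Set.disjoint_left]; intro x hx hy; exact absurd hx.2 (not_le.2 hy.1)), Ioc_union_Ioo_eq_Ioo h1.le h2]

lemma lshift (a b c : ℝ) (f : ℝ → ℝ≥0∞) :
    ∫⁻ x in Ioo (a + c) (b + c), f x = ∫⁻ x in Ioo a b, f (x + c) := by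
  rw [subst1 (φ := fun x => x + c) (φ' := fun _ => 1) (s := Ioo a b) (t := Ioo (a + c) (b + c)) measurableSet_Ioo
    (fun x _ => (hasDerivAt_id x).add_const c) (bij_of_inv (ψ := fun x => x - c)
      (by intro x hx; exact ⟨by linarith [hx.1], by linarith [hx.2]⟩)
      (by intro x hx; exact ⟨by linarith [hx.1], by linarith [hx.2]⟩) (by simp) (by simp)) f]
  simp

lemma lneg (a b : ℝ) (f : ℝ → ℝ≥0∞) :
    ∫⁻ x in Ioo (-b) (-a), f x = ∫⁻ x in Ioo a b, f (-x) := by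
  rw [subst1 (φ := fun x => -x) (φ' := fun _ => -1) (s := Ioo a b) (t := Ioo (-b) (-a)) measurableSet_Ioo
    (fun x _ => hasDerivAt_neg x) (bij_of_inv (ψ := fun x => -x)
      (by intro x hx; exact ⟨by linarith [hx.2], by linarith [hx.1]⟩)
      (by intro x hx; exact ⟨by linarith [hx.2], by linarith [hx.1]⟩) (by simp) (by simp)) f]
  simp

noncomputable def tri : ℝ≥0∞ := ∫⁻ T in Ioo (0:ℝ) 1, ∫⁻ U in Ioo (0:ℝ) T, ENNReal.ofReal (hf T U)

lemma hf_symm (T U : ℝ) : hf T U = hf U T := by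
  unfold hf; congr 2; ring

lemma hf_m : Measurable fun p : ℝ × ℝ => ENNReal.ofReal (hf p.1 p.2) := hf_meas.ennreal_ofReal

lemma tri_swap : ∫⁻ T in Ioo (0:ℝ) 1, ∫⁻ U in Ioo T 1, ENNReal.ofReal (hf T U) = tri := by
  unfold tri
  rw [lreg (a := fun T => Ioo T 1) (b := fun U => Ioo 0 U) (s' := Ioo 0 1) measurableSet_Ioo measurableSet_Ioo (fun _ => measurableSet_Ioo)
    (fun _ => measurableSet_Ioo) (by simp only [mem_Ioo]; measurability)
    (by intro x y; simp only [mem_Ioo]; constructor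
        · rintro ⟨⟨h1, h2⟩, h3, h4⟩; exact ⟨⟨by linarith, by linarith⟩, by linarith, by linarith⟩
        · rintro ⟨⟨h1, h2⟩, h3, h4⟩; exact ⟨⟨by linarith, by linarith⟩, by linarith, by linarith⟩) _ hf_m]
  simp only [hf_symm]

lemma lmeas {a : ℝ → Set ℝ} (ha : ∀ x, MeasurableSet (a x))
    (hS : MeasurableSet {p : ℝ × ℝ | p.2 ∈ a p.1}) (f : ℝ → ℝ → ℝ≥0∞)
    (hf : Measurable fun p : ℝ × ℝ => f p.1 p.2) : Measurable fun x => ∫⁻ y in a x, f x y := by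
  have : (fun x => ∫⁻ y in a x, f x y) = fun x => ∫⁻ y, {p : ℝ × ℝ | p.2 ∈ a p.1}.indicator (fun p => f p.1 p.2) (x, y) := by
    ext x
    rw [← lintegral_indicator (ha x)]
    congr 1
  rw [this]
  exact Measurable.lintegral_prod_right' (hf.indicator hS)

lemma B4 : 8 * BB = 2 * tri := by
  rw [B3, two_mul]
  nth_rewrite 2 [← tri_swap]
  unfold tri
  rw [← lintegral_add_right _ (lmeas (fun _ => measurableSet_Ioo) (by simp only [mem_Ioo]; measurability) _ hf_m)]
  apply lcongr measurableSet_Ioo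
  intro T hT
  exact lcut hT.1 hT.2 _

lemma tri_neg : ∫⁻ T in Ioo (0:ℝ) 1, ∫⁻ U in Ioo (T - 1) 0, ENNReal.ofReal (hf T U) = tri := by
  have h1 : ∀ T, ∫⁻ U in Ioo (T - 1) 0, ENNReal.ofReal (hf T U) = ∫⁻ V in Ioo 0 (1 - T), ENNReal.ofReal (hf T (-V)) := by
    intro T
    have := lneg 0 (1 - T) (fun U => ENNReal.ofReal (hf T U))
    rwa [neg_sub, neg_zero] at this
  simp only [h1]
  rw [lreg (a := fun T => Ioo 0 (1 - T)) (b := fun V => Ioo 0 (1 - V)) (s' := Ioo 0 1) measurableSet_Ioo measurableSet_Ioo (fun _ => measurableSet_Ioo)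
    (fun _ => measurableSet_Ioo) (by simp only [mem_Ioo]; measurability)
    (by intro x y; simp only [mem_Ioo]; constructor
        · rintro ⟨⟨h1, h2⟩, h3, h4⟩; exact ⟨⟨by linarith, by linarith⟩, by linarith, by linarith⟩
        · rintro ⟨⟨h1, h2⟩, h3, h4⟩; exact ⟨⟨by linarith, by linarith⟩, by linarith, by linarith⟩) _
    (hf_m.comp (by fun_prop : Measurable fun p : ℝ × ℝ => (p.1, -p.2))), ← tri_swap]
  apply lcongr measurableSet_Ioo
  intro V hV
  have := lshift 0 (1 - V) V (fun U => ENNReal.ofReal (hf V U))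
  rw [zero_add, sub_add_cancel] at this
  rw [this]
  congr 1; ext T; congr 1
  unfold hf; congr 2; ring

lemma B5 : ∫⁻ T in Ioo (0:ℝ) 1, ∫⁻ U in Ioo (T - 1) 1, ENNReal.ofReal (hf T U) = 3 * tri := by
  have h : (∫⁻ T in Ioo (0:ℝ) 1, ∫⁻ U in Ioo (T - 1) 0, ENNReal.ofReal (hf T U))
     + (∫⁻ T in Ioo (0:ℝ) 1, ∫⁻ U in Ioo (0:ℝ) 1, ENNReal.ofReal (hf T U)) = 3 * tri := by
    rw [tri_neg, ← B3, B4]; ring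
  rw [← h, ← lintegral_add_right _ (Measurable.lintegral_prod_right' hf_m)]
  apply lcongr measurableSet_Ioo
  intro T hT
  exact lcut (by linarith [hT.2]) (by norm_num) _

lemma hexsub (m M : ℝ) (hm : 0 < m) (hM : m < M) (hs : m + M = 2) (f : ℝ → ℝ≥0∞) :
    ∫⁻ τ in Ioi (0:ℝ), f τ = ∫⁻ y in Ioo 0 m, ENNReal.ofReal
      (2 * (m ^ 2 * M ^ 2 - y ^ 4) / (((m ^ 2 - y ^ 2) * (M ^ 2 - y ^ 2)) * √((m ^ 2 - y ^ 2) * (M ^ 2 - y ^ 2))))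
      * f (2 * y / √((m ^ 2 - y ^ 2) * (M ^ 2 - y ^ 2))) := by
  have hP : ∀ y ∈ Ioo 0 m, 0 < (m ^ 2 - y ^ 2) * (M ^ 2 - y ^ 2) := by
    intro y hy
    exact mul_pos (by nlinarith [hy.1, hy.2]) (by nlinarith [hy.1, hy.2])
  have hQ : ∀ y ∈ Ioo 0 m, y ^ 2 < m * M := by
    intro y hy
    nlinarith [hy.1, hy.2]
  rw [subst1 (φ := fun y => 2 * y / √((m ^ 2 - y ^ 2) * (M ^ 2 - y ^ 2)))
    (φ' := fun y => 2 * (m ^ 2 * M ^ 2 - y ^ 4) / (((m ^ 2 - y ^ 2) * (M ^ 2 - y ^ 2)) * √((m ^ 2 - y ^ 2) * (M ^ 2 - y ^ 2))))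
    (s := Ioo 0 m) (t := Ioi 0) measurableSet_Ioo _ _ f]
  · apply lcongr measurableSet_Ioo
    intro y hy
    have h1 := hP y hy
    have h2 : y ^ 4 ≤ m ^ 2 * M ^ 2 := by nlinarith [hQ y hy, sq_nonneg y]
    rw [abs_of_nonneg]
    exact div_nonneg (by linarith) (by positivity)
  · intro y hy
    have h1 := hP y hy
    have hd : HasDerivAt (fun y : ℝ => (m ^ 2 - y ^ 2) * (M ^ 2 - y ^ 2)) (-(2 * y) * (M ^ 2 - y ^ 2) + (m ^ 2 - y ^ 2) * (-(2 * y))) y := by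
      have := ((hasDerivAt_pow 2 y).const_sub (m ^ 2)).fun_mul ((hasDerivAt_pow 2 y).const_sub (M ^ 2))
      exact this.congr_deriv (by norm_num)
    have := ((hasDerivAt_id' y).const_mul 2).fun_div (hd.sqrt h1.ne') (sqrt_pos.2 h1).ne'
    refine this.congr_deriv ?_
    have h3 := sqrt_pos.2 h1
    have h4 := sq_sqrt h1.le
    rw [h4]
    set w := √((m ^ 2 - y ^ 2) * (M ^ 2 - y ^ 2)) 
    rw [div_eq_div_iff (by positivity) (by positivity)]
    field_simp
    rw [h4]
    ring
  · refine ⟨?_, ?_, ?_⟩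
    · intro y hy
      have := hP y hy
      have := hy.1
      simp only [mem_Ioi]; positivity
    · intro y hy z hz h
      have h1 := hP y hy
      have h2 := hP z hz
      have hy0 := hy.1
      have hz0 := hz.1
      have h3 : (2 * y / √((m ^ 2 - y ^ 2) * (M ^ 2 - y ^ 2))) ^ 2 = (2 * z / √((m ^ 2 - z ^ 2) * (M ^ 2 - z ^ 2))) ^ 2 := by
        rw [show 2 * y / √((m ^ 2 - y ^ 2) * (M ^ 2 - y ^ 2)) = 2 * z / √((m ^ 2 - z ^ 2) * (M ^ 2 - z ^ 2)) from h]
      rw [div_pow, div_pow, sq_sqrt h1.le, sq_sqrt h2.le, div_eq_div_iff h1.ne' h2.ne'] at h3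
      have h4 : (y - z) * ((y + z) * (m * M * (m * M) - y ^ 2 * z ^ 2)) = 0 := by linarith
      have h5 : y ^ 2 * z ^ 2 < m * M * (m * M) := mul_lt_mul'' (hQ y hy) (hQ z hz) (by positivity) (by positivity)
      rcases mul_eq_zero.1 h4 with h6 | h6
      · linarith
      · exact absurd h6 (mul_pos (by linarith) (by linarith)).ne'
    · intro t ht
      have ht : 0 < t := ht
      have hc : ContinuousOn (fun y : ℝ => 4 * y ^ 2 - t ^ 2 * ((m ^ 2 - y ^ 2) * (M ^ 2 - y ^ 2))) (Icc 0 m) := by fun_prop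
      have := intermediate_value_Ioo hm.le hc
      have h0 : (0:ℝ) ∈ Ioo ((fun y : ℝ => 4 * y ^ 2 - t ^ 2 * ((m ^ 2 - y ^ 2) * (M ^ 2 - y ^ 2))) 0) ((fun y : ℝ => 4 * y ^ 2 - t ^ 2 * ((m ^ 2 - y ^ 2) * (M ^ 2 - y ^ 2))) m) := by
        have hM0 : 0 < M := by linarith
        constructor
        · simp; positivity
        · simp; positivity
      obtain ⟨y, hy, hy2⟩ := this h0
      refine ⟨y, hy, ?_⟩
      have h1 := hP y hy
      have hy0 := hy.1
      have h3 : 2 * y = t * √((m ^ 2 - y ^ 2) * (M ^ 2 - y ^ 2)) := by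
        rw [← sqrt_sq (show 0 ≤ 2 * y by positivity)]
        nth_rewrite 1 [← sqrt_sq ht.le]
        rw [← sqrt_mul (by positivity)]
        congr 1
        simp only at hy2
        linarith
      simp only
      rw [h3]
      field_simp

lemma hexinner (T : ℝ) (hT : T ∈ Ioo (0:ℝ) 1) :
    ∫⁻ U in Ioo (T - 1) 1, ENNReal.ofReal (1 / √((1 - U ^ 2) * (1 - (T - U) ^ 2)))
      = 2 * ∫⁻ τ in Ioi (0:ℝ), ENNReal.ofReal (1 / √((1 + τ ^ 2) * (4 + T ^ 2 * τ ^ 2))) := by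
  have h1 := lshift (-(1 - T / 2)) (1 - T / 2) (T / 2) (fun U => ENNReal.ofReal (1 / √((1 - U ^ 2) * (1 - (T - U) ^ 2))))
  rw [show -(1 - T / 2) + T / 2 = T - 1 by ring, show 1 - T / 2 + T / 2 = 1 by ring] at h1
  rw [h1, lsym _ _ (by fun_prop) (by intro y; congr 3; ring)]
  congr 1
  obtain ⟨hT0, hT1⟩ := hT
  rw [hexsub (1 - T / 2) (1 + T / 2) (by linarith) (by linarith) (by ring)]
  apply lcongr measurableSet_Ioo
  intro y hy
  obtain ⟨hy0, hy1⟩ := hy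
  set m := 1 - T / 2 with hm
  set M := 1 + T / 2 with hM
  have hP : 0 < (m ^ 2 - y ^ 2) * (M ^ 2 - y ^ 2) := mul_pos (by nlinarith) (by nlinarith)
  have hQ : y ^ 2 < m * M := by nlinarith
  have h2 : y ^ 4 ≤ m ^ 2 * M ^ 2 := by nlinarith [sq_nonneg y]
  rw [← ENNReal.ofReal_mul (div_nonneg (by linarith) (by positivity))]
  congr 1
  have e1 : (1 - (y + T / 2) ^ 2) * (1 - (T - (y + T / 2)) ^ 2) = (m ^ 2 - y ^ 2) * (M ^ 2 - y ^ 2) := by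
    rw [hm, hM]; ring
  rw [e1]
  set P := (m ^ 2 - y ^ 2) * (M ^ 2 - y ^ 2) with hPd
  have e2 : (1 + (2 * y / √P) ^ 2) * (4 + T ^ 2 * (2 * y / √P) ^ 2)
      = (2 * ((m * M) ^ 2 - y ^ 4) / P) ^ 2 := by
    rw [div_pow, sq_sqrt hP.le, div_pow]
    field_simp
    have a1 : P + 2 ^ 2 * y ^ 2 = (m * M + y ^ 2) ^ 2 := by rw [hPd, hm, hM]; ring
    have a2 : P * 4 + 2 ^ 2 * y ^ 2 * T ^ 2 = 4 * (m * M - y ^ 2) ^ 2 := by rw [hPd, hm, hM]; ring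
    rw [a1, a2]; ring
  have h3 : 0 < (m * M) ^ 2 - y ^ 4 := by nlinarith [sq_nonneg y]
  rw [e2, sqrt_sq (by positivity), ← mul_pow]
  have := sqrt_pos.2 hP
  have h4 : (m * M) ^ 2 - y ^ 4 ≠ 0 := h3.ne'
  generalize (m * M) ^ 2 - y ^ 4 = w at h4
  field_simp

noncomputable def LL : ℝ≥0∞ := ∫⁻ k in Ioo (0:ℝ) 1, ∫⁻ τ in Ioi (0:ℝ),
  ENNReal.ofReal (1 / √(1 - k ^ 2) * (1 / √((1 + τ ^ 2) * (4 + k ^ 2 * τ ^ 2))))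

lemma B6 : 6 * BB = LL := by
  have h : 3 * tri = 2 * LL := by
    rw [← B5, LL, ← lintegral_const_mul' _ _ (by norm_num)]
    apply lcongr measurableSet_Ioo
    intro T hT
    have h0 : 0 < 1 - T ^ 2 := by nlinarith [hT.1, hT.2]
    rw [← cmul _ (by positivity), mul_left_comm, ← hexinner T hT, cmul _ (by positivity)]
    congr 1; ext U; congr 1
    unfold hf
    rw [mul_assoc, sqrt_mul h0.le, one_div_mul_one_div]
  have : 2 * (6 * BB) = 2 * LL := by
    rw [← h]
    have := B4
    have h8 : 2 * (4 * BB) = 2 * tri := by rw [← this]; ring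
    rw [← (ENNReal.mul_right_inj (by norm_num) (by norm_num)).1 h8]; ring
  exact (ENNReal.mul_right_inj (by norm_num) (by norm_num)).1 this

end hexagon

section ffchain

lemma zsub (κ : ℝ) (hκ : 0 < κ) (f : ℝ → ℝ≥0∞) :
    ∫⁻ z, f z = ∫⁻ y in Ioi (0:ℝ), ENNReal.ofReal (1 + κ / y ^ 2) * f (y - κ / y) := by
  have h1 : ∀ z : ℝ, 0 < z + √(z ^ 2 + 4 * κ) := by
    intro z
    have : |z| < √(z ^ 2 + 4 * κ) := by
      rw [← sqrt_sq_eq_abs]; exact sqrt_lt_sqrt (by positivity) (by linarith)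
    linarith [neg_abs_le z]
  rw [← setLIntegral_univ, subst1 (φ := fun y => y - κ / y) (φ' := fun y => 1 + κ / y ^ 2)
    (s := Ioi 0) (t := univ) measurableSet_Ioi _ (bij_of_inv (ψ := fun z => (z + √(z ^ 2 + 4 * κ)) / 2) (by simp) _ _ _) f]
  · apply lcongr measurableSet_Ioi
    intro y hy
    have hy : 0 < y := hy
    rw [abs_of_nonneg (by positivity)]
  · intro y hy
    have hy : 0 < y := hy
    exact ((hasDerivAt_id' y).fun_sub ((hasDerivAt_inv hy.ne').const_mul κ)).congr_deriv (by field_simp; ring)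
  · intro z _
    have := h1 z
    simp only [mem_Ioi]; positivity
  · intro y hy
    have hy : 0 < y := hy
    rw [show (y - κ / y) ^ 2 + 4 * κ = (y + κ / y) ^ 2 by field_simp; ring, sqrt_sq (by positivity)]
    ring
  · intro z _
    have h2 := h1 z
    have h3 := sq_sqrt (show 0 ≤ z ^ 2 + 4 * κ by positivity)
    set w := √(z ^ 2 + 4 * κ)
    field_simp
    nlinarith

lemma ffinner (T : ℝ) :
    ∫⁻ U : ℝ, ENNReal.ofReal (1 / √((1 + U ^ 2) * (1 + (T - U) ^ 2)))
      = 4 * ∫⁻ z in Ioi (0:ℝ), ENNReal.ofReal (1 / √((z ^ 2 + 4) * (z ^ 2 + 4 + T ^ 2))) := by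
  rw [← lintegral_add_right_eq_self _ (T / 2), leven _ (by fun_prop) (by intro y; congr 3; ring)]
  have h := leven (fun z : ℝ => ENNReal.ofReal (1 / √((z ^ 2 + 4) * (z ^ 2 + 4 + T ^ 2)))) (by fun_prop) (by simp)
  rw [show (4:ℝ≥0∞) = 2 * 2 by norm_num, mul_assoc, ← h, zsub (1 + T ^ 2 / 4) (by positivity)]
  congr 1
  apply lcongr measurableSet_Ioi
  intro y hy
  have hy : 0 < y := hy
  rw [← ENNReal.ofReal_mul (by positivity)]
  congr 1
  set κ := 1 + T ^ 2 / 4 with hκ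
  have e1 : (y - κ / y) ^ 2 + 4 = (1 + (y + T / 2) ^ 2) * (1 + (T - (y + T / 2)) ^ 2) / y ^ 2 := by
    rw [hκ]; field_simp; ring
  have e2 : (y - κ / y) ^ 2 + 4 + T ^ 2 = (y * (1 + κ / y ^ 2)) ^ 2 := by
    rw [hκ]; field_simp; ring
  have hk : 0 < κ := by positivity
  have hQ : 0 < (1 + (y + T / 2) ^ 2) * (1 + (T - (y + T / 2)) ^ 2) := by positivity
  generalize (1 + (y + T / 2) ^ 2) * (1 + (T - (y + T / 2)) ^ 2) = Q at e1 hQ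
  rw [e2, e1, sqrt_mul (by positivity), sqrt_div (by positivity), sqrt_sq (by positivity), sqrt_sq (by positivity)]
  field_simp

lemma ksub (f : ℝ → ℝ≥0∞) : ∫⁻ z in Ioi (0:ℝ), f z = ∫⁻ k in Ioo (0:ℝ) 1,
    ENNReal.ofReal (2 / (k ^ 2 * √(1 - k ^ 2))) * f (2 * √(1 - k ^ 2) / k) := by
  have h1 : ∀ k ∈ Ioo (0:ℝ) 1, 0 < 1 - k ^ 2 := by
    intro k hk; nlinarith [hk.1, hk.2]
  rw [subst1 (φ := fun k => 2 * √(1 - k ^ 2) / k) (φ' := fun k => - (2 / (k ^ 2 * √(1 - k ^ 2))))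
    (s := Ioo 0 1) (t := Ioi 0) measurableSet_Ioo _ (bij_of_inv (ψ := fun z => 2 / √(z ^ 2 + 4)) _ _ _ _) f]
  · apply lcongr measurableSet_Ioo
    intro k hk
    rw [abs_neg, abs_of_nonneg (by positivity)]
  · intro k hk
    have h2 := h1 k hk
    have hk0 := hk.1
    refine (((((hasDerivAt_pow 2 k).const_sub 1).sqrt h2.ne').const_mul 2).fun_div (hasDerivAt_id' k) hk0.ne').congr_deriv ?_
    have h4 := sq_sqrt h2.le
    have h5 := sqrt_pos.2 h2
    set w := √(1 - k ^ 2)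
    push_cast
    field_simp
    rw [h4]; ring
  · intro k hk
    have h5 := sqrt_pos.2 (h1 k hk)
    have hk0 := hk.1
    simp only [mem_Ioi]; positivity
  · intro z hz
    have hz : 0 < z := hz
    refine ⟨by positivity, ?_⟩
    rw [div_lt_one (by positivity)]
    exact lt_sqrt_of_sq_lt (by nlinarith)
  · intro k hk
    have hk0 := hk.1
    rw [div_pow, mul_pow, sq_sqrt (h1 k hk).le, show 2 ^ 2 * (1 - k ^ 2) / k ^ 2 + 4 = (2 / k) ^ 2 by field_simp; ring,
      sqrt_sq (by positivity)]
    field_simp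
  · intro z hz
    have hz : 0 < z := hz
    rw [div_pow, sq_sqrt (by positivity), show 1 - 2 ^ 2 / (z ^ 2 + 4) = z ^ 2 / (z ^ 2 + 4) by field_simp; ring,
      sqrt_div (by positivity), sqrt_sq hz.le]
    field_simp

lemma FF_LL : FF = 8 * LL := by
  unfold FF
  rw [leven _ (Measurable.lintegral_prod_right' (f := fun p : ℝ × ℝ => ENNReal.ofReal (1 / √((1 + p.1 ^ 2) * (1 + p.2 ^ 2) * (1 + (p.1 - p.2) ^ 2)))) (by fun_prop)) (by
    intro T
    rw [lscale (-1) (by norm_num)]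
    simp only [abs_neg, abs_one, ENNReal.ofReal_one, one_mul]
    congr 1; ext U; congr 3; ring)]
  calc _ = 2 * ∫⁻ T in Ioi (0:ℝ), 4 * ∫⁻ z in Ioi (0:ℝ), ENNReal.ofReal (1 / √(1 + T ^ 2) * (1 / √((z ^ 2 + 4) * (z ^ 2 + 4 + T ^ 2)))) := by
        congr 1; congr 1; ext T
        rw [← cmul _ (by positivity), mul_left_comm, ← ffinner, cmul _ (by positivity)]
        congr 1; ext U; congr 1
        rw [mul_assoc, sqrt_mul (by positivity), one_div_mul_one_div]
    _ = 8 * ∫⁻ z in Ioi (0:ℝ), ∫⁻ T in Ioi (0:ℝ), ENNReal.ofReal (1 / √(1 + T ^ 2) * (1 / √((z ^ 2 + 4) * (z ^ 2 + 4 + T ^ 2)))) := by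
        rw [lintegral_const_mul' _ _ (by norm_num), ← mul_assoc, lsw2 _ (by fun_prop)]
        norm_num
    _ = _ := by
        rw [ksub]
        unfold LL
        congr 1
        apply lcongr measurableSet_Ioo
        intro k hk
        have hk0 := hk.1
        have h2 : 0 < 1 - k ^ 2 := by nlinarith [hk.1, hk.2]
        rw [cmul _ (by positivity)]
        congr 1; ext T; congr 1
        have e1 : (2 * √(1 - k ^ 2) / k) ^ 2 + 4 = (2 / k) ^ 2 := by
          rw [div_pow, mul_pow, sq_sqrt h2.le]; field_simp; ring
        rw [e1, sqrt_mul (by positivity), sqrt_sq (by positivity), sqrt_mul (by positivity),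
          show (2 / k) ^ 2 + T ^ 2 = (4 + k ^ 2 * T ^ 2) / k ^ 2 by field_simp; ring, sqrt_div (by positivity),
          sqrt_sq hk0.le]
        have := sqrt_pos.2 h2
        field_simp

end ffchain

section ffj

lemma lhalf (w : ℝ) (hw : 0 < w) :
    ∫⁻ s in Ioi (0:ℝ), ENNReal.ofReal (1 / √s * exp (-(s * w))) = ENNReal.ofReal (√π / √w) := by
  have h := lgamma (1/2) w (by norm_num) hw
  rw [Real.Gamma_one_half_eq, rpow_neg hw.le, ← sqrt_eq_rpow] at h
  rw [div_eq_mul_inv, ← h]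
  apply lcongr measurableSet_Ioi
  intro s hs
  have hs : 0 < s := hs
  congr 1
  rw [show (1/2 - 1 : ℝ) = -(1/2) by norm_num, rpow_neg hs.le, ← sqrt_eq_rpow, one_div, mul_comm s w]

lemma inv_sqrt3 (a b c : ℝ) (ha : 0 < a) (hb : 0 < b) (hc : 0 < c) :
    ENNReal.ofReal (1 / √(a * b * c)) = ENNReal.ofReal (1 / √π ^ 3) * ∫⁻ s1 in Ioi (0:ℝ), ∫⁻ s2 in Ioi (0:ℝ), ∫⁻ s3 in Ioi (0:ℝ),
      ENNReal.ofReal (1 / √s1 * exp (-(s1 * a)) * (1 / √s2 * exp (-(s2 * b)) * (1 / √s3 * exp (-(s3 * c))))) := by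
  rw [← lprod3 measurableSet_Ioi measurableSet_Ioi (by fun_prop) (by fun_prop) (fun s _ => by positivity) (fun s _ => by positivity),
    lhalf a ha, lhalf b hb, lhalf c hc, ← ENNReal.ofReal_mul (by positivity), ← ENNReal.ofReal_mul (by positivity), ← ENNReal.ofReal_mul (by positivity)]
  congr 1
  rw [sqrt_mul (by positivity), sqrt_mul (by positivity)]
  field_simp

lemma scal3 (F : ℝ → ℝ → ℝ → ℝ≥0∞) (hF : Measurable fun p : ℝ × ℝ × ℝ => F p.1 p.2.1 p.2.2) :
    ∫⁻ s1 in Ioi (0:ℝ), ∫⁻ s2 in Ioi (0:ℝ), ∫⁻ s3 in Ioi (0:ℝ), F s1 s2 s3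
      = ∫⁻ X in Ioi (0:ℝ), ∫⁻ Y in Ioi (0:ℝ), ∫⁻ l in Ioi (0:ℝ), ENNReal.ofReal (l ^ 2) * F (l * X) (l * Y) l := by
  rw [← lsw3 (fun t a b => F a b t) (hF.comp (by fun_prop : Measurable fun p : ℝ × ℝ × ℝ => (p.2.1, p.2.2, p.1)))]
  rw [← lsw3 (fun l X Y => ENNReal.ofReal (l ^ 2) * F (l * X) (l * Y) l) (by
    apply Measurable.mul (by fun_prop)
    exact hF.comp (by fun_prop : Measurable fun p : ℝ × ℝ × ℝ => (p.1 * p.2.1, p.1 * p.2.2, p.1)))]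
  apply lcongr measurableSet_Ioi
  intro l hl
  have hl : 0 < l := hl
  rw [lscale_pos l hl, ← lintegral_const_mul' _ _ ENNReal.ofReal_ne_top]
  congr 1; ext X
  rw [lscale_pos l hl, ← lintegral_const_mul' _ _ ENNReal.ofReal_ne_top, ← lintegral_const_mul' _ _ ENNReal.ofReal_ne_top]
  congr 1; ext Y
  rw [← mul_assoc, ← ENNReal.ofReal_mul hl.le, sq]

lemma quad3 (q1 q2 q3 : ℝ → ℝ → ℝ) (m1 : Measurable fun p : ℝ × ℝ => q1 p.1 p.2) (m2 : Measurable fun p : ℝ × ℝ => q2 p.1 p.2)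
    (m3 : Measurable fun p : ℝ × ℝ => q3 p.1 p.2) (h : ∀ᵐ x : ℝ, ∀ y, 0 < q1 x y ∧ 0 < q2 x y ∧ 0 < q3 x y) :
    ∫⁻ x : ℝ, ∫⁻ y : ℝ, ENNReal.ofReal (1 / √(q1 x y * q2 x y * q3 x y)) =
    ENNReal.ofReal (1 / √π ^ 3) * ∫⁻ X in Ioi (0:ℝ), ∫⁻ Y in Ioi (0:ℝ), ∫⁻ l in Ioi (0:ℝ), ENNReal.ofReal (l ^ 2 / (√(l * X) * √(l * Y) * √l)) *
      ∫⁻ x : ℝ, ∫⁻ y : ℝ, ENNReal.ofReal (exp (-(l * X * q1 x y + l * Y * q2 x y + l * q3 x y))) := by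
  have e1 : ∫⁻ x : ℝ, ∫⁻ y : ℝ, ENNReal.ofReal (1 / √(q1 x y * q2 x y * q3 x y)) =
      ENNReal.ofReal (1 / √π ^ 3) * ∫⁻ x : ℝ, ∫⁻ y : ℝ, ∫⁻ s1 in Ioi (0:ℝ), ∫⁻ s2 in Ioi (0:ℝ), ∫⁻ s3 in Ioi (0:ℝ),
      ENNReal.ofReal (1 / √s1 * exp (-(s1 * q1 x y)) * (1 / √s2 * exp (-(s2 * q2 x y)) * (1 / √s3 * exp (-(s3 * q3 x y))))) := by
    rw [← lintegral_const_mul' _ _ ENNReal.ofReal_ne_top]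
    apply lintegral_congr_ae
    filter_upwards [h] with x hx
    rw [← lintegral_const_mul' _ _ ENNReal.ofReal_ne_top]
    congr 1; ext y
    exact inv_sqrt3 _ _ _ (hx y).1 (hx y).2.1 (hx y).2.2
  rw [e1]
  congr 1
  rw [lsw23 (fun x y s1 s2 s3 => ENNReal.ofReal (1 / √s1 * exp (-(s1 * q1 x y)) * (1 / √s2 * exp (-(s2 * q2 x y)) * (1 / √s3 * exp (-(s3 * q3 x y)))))) (by
    have n1 : Measurable fun p : ℝ × ℝ × ℝ × ℝ × ℝ => q1 p.1 p.2.1 := m1.comp (by fun_prop : Measurable fun p : ℝ × ℝ × ℝ × ℝ × ℝ => (p.1, p.2.1))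
    have n2 : Measurable fun p : ℝ × ℝ × ℝ × ℝ × ℝ => q2 p.1 p.2.1 := m2.comp (by fun_prop : Measurable fun p : ℝ × ℝ × ℝ × ℝ × ℝ => (p.1, p.2.1))
    have n3 : Measurable fun p : ℝ × ℝ × ℝ × ℝ × ℝ => q3 p.1 p.2.1 := m3.comp (by fun_prop : Measurable fun p : ℝ × ℝ × ℝ × ℝ × ℝ => (p.1, p.2.1))
    fun_prop)]
  rw [scal3 (fun s1 s2 s3 => ∫⁻ x : ℝ, ∫⁻ y : ℝ, ENNReal.ofReal (1 / √s1 * exp (-(s1 * q1 x y)) * (1 / √s2 * exp (-(s2 * q2 x y)) * (1 / √s3 * exp (-(s3 * q3 x y)))))) (by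
    apply Measurable.lintegral_prod_right' (f := fun p : (ℝ × ℝ × ℝ) × ℝ => ∫⁻ y : ℝ, ENNReal.ofReal (1 / √p.1.1 * exp (-(p.1.1 * q1 p.2 y)) * (1 / √p.1.2.1 * exp (-(p.1.2.1 * q2 p.2 y)) * (1 / √p.1.2.2 * exp (-(p.1.2.2 * q3 p.2 y))))))
    apply Measurable.lintegral_prod_right' (f := fun p : ((ℝ × ℝ × ℝ) × ℝ) × ℝ => ENNReal.ofReal (1 / √p.1.1.1 * exp (-(p.1.1.1 * q1 p.1.2 p.2)) * (1 / √p.1.1.2.1 * exp (-(p.1.1.2.1 * q2 p.1.2 p.2)) * (1 / √p.1.1.2.2 * exp (-(p.1.1.2.2 * q3 p.1.2 p.2))))))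
    have n1 : Measurable fun p : ((ℝ × ℝ × ℝ) × ℝ) × ℝ => q1 p.1.2 p.2 := m1.comp (by fun_prop : Measurable fun p : ((ℝ × ℝ × ℝ) × ℝ) × ℝ => (p.1.2, p.2))
    have n2 : Measurable fun p : ((ℝ × ℝ × ℝ) × ℝ) × ℝ => q2 p.1.2 p.2 := m2.comp (by fun_prop : Measurable fun p : ((ℝ × ℝ × ℝ) × ℝ) × ℝ => (p.1.2, p.2))
    have n3 : Measurable fun p : ((ℝ × ℝ × ℝ) × ℝ) × ℝ => q3 p.1.2 p.2 := m3.comp (by fun_prop : Measurable fun p : ((ℝ × ℝ × ℝ) × ℝ) × ℝ => (p.1.2, p.2))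
    fun_prop)]
  apply lcongr measurableSet_Ioi
  intro X hX
  apply lcongr measurableSet_Ioi
  intro Y hY
  apply lcongr measurableSet_Ioi
  intro l hl
  rw [← lintegral_const_mul' _ _ ENNReal.ofReal_ne_top, ← lintegral_const_mul' _ _ ENNReal.ofReal_ne_top]
  congr 1; ext x
  rw [cmul _ (by positivity), cmul _ (by positivity)]
  congr 1; ext y; congr 1
  rw [show exp (-(l * X * q1 x y + l * Y * q2 x y + l * q3 x y)) = exp (-(l * X * q1 x y)) * exp (-(l * Y * q2 x y)) * exp (-(l * q3 x y)) by
    rw [← Real.exp_add, ← Real.exp_add]; congr 1; ring]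
  ring

noncomputable def HH : ℝ≥0∞ := ∫⁻ X in Ioi (0:ℝ), ∫⁻ Y in Ioi (0:ℝ), ENNReal.ofReal (1 / √(X * Y * (1 + X + Y) * (X + Y + X * Y)))

lemma gaussF (a b c : ℝ) (ha : 0 < a) (hb : 0 < b) (hc : 0 < c) :
    ∫⁻ T : ℝ, ∫⁻ U : ℝ, ENNReal.ofReal (exp (-(a * (1 + T ^ 2) + b * (1 + U ^ 2) + c * (1 + (T - U) ^ 2))))
      = ENNReal.ofReal (exp (-(a + b + c)) * (π / √(a * b + a * c + b * c))) := by
  calc _ = ∫⁻ T : ℝ, ∫⁻ U : ℝ, ENNReal.ofReal (exp (-(a + b + c)) * (exp (-((a + b * c / (b + c)) * (T - 0) ^ 2)) * exp (-((b + c) * (U - c * T / (b + c)) ^ 2)))) := by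
        congr 1; ext T; congr 1; ext U; congr 1
        rw [← Real.exp_add, ← Real.exp_add]
        congr 1
        field_simp
        ring
    _ = _ := by
        simp only [ENNReal.ofReal_mul (Real.exp_nonneg _), lintegral_const_mul' _ _ ENNReal.ofReal_ne_top, lgauss _ _ (show 0 < b + c by positivity)]
        rw [lintegral_mul_const' _ _ ENNReal.ofReal_ne_top, lgauss _ _ (by positivity), ← ENNReal.ofReal_mul (by positivity)]
        congr 2
        rw [← sqrt_mul (by positivity), show a * b + a * c + b * c = (a + b * c / (b + c)) * (b + c) by field_simp]
        rw [show π / (a + b * c / (b + c)) * (π / (b + c)) = π ^ 2 / ((a + b * c / (b + c)) * (b + c)) by field_simp, sqrt_div (by positivity), sqrt_sq (by positivity)]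

lemma FF_HH : FF = HH := by
  unfold FF
  rw [quad3 (fun T U => 1 + T ^ 2) (fun T U => 1 + U ^ 2) (fun T U => 1 + (T - U) ^ 2) (by fun_prop) (by fun_prop) (by fun_prop)
    (Filter.Eventually.of_forall (fun x y => ⟨by positivity, by positivity, by positivity⟩))]
  unfold HH
  rw [← lintegral_const_mul' _ _ ENNReal.ofReal_ne_top]
  apply lcongr measurableSet_Ioi
  intro X hX
  rw [← lintegral_const_mul' _ _ ENNReal.ofReal_ne_top]
  apply lcongr measurableSet_Ioi
  intro Y hY
  have hX : 0 < X := hX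
  have hY : 0 < Y := hY
  calc _ = ENNReal.ofReal (1 / √π ^ 3) * ∫⁻ l in Ioi (0:ℝ), ENNReal.ofReal (π / (√X * √Y * √(X + Y + X * Y)) * (1 / √l * exp (-(l * (1 + X + Y))))) := by
        congr 1
        apply lcongr measurableSet_Ioi
        intro l hl
        have hl : 0 < l := hl
        rw [gaussF (l * X) (l * Y) l (by positivity) (by positivity) hl, ← ENNReal.ofReal_mul (by positivity)]
        congr 1
        rw [show l * X * (l * Y) + l * X * l + l * Y * l = l ^ 2 * (X + Y + X * Y) by ring, sqrt_mul (by positivity) (X + Y + X * Y),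
          sqrt_sq hl.le, sqrt_mul hl.le, sqrt_mul hl.le, show -(l * X + l * Y + l) = -(l * (1 + X + Y)) by ring]
        have h := sq_sqrt hl.le
        have h0 := sqrt_pos.2 hl
        set w := √l
        rw [← h]
        field_simp
    _ = _ := by
        rw [← cmul _ (by positivity), lhalf _ (by positivity), ← ENNReal.ofReal_mul (by positivity), ← ENNReal.ofReal_mul (by positivity)]
        congr 1
        have : √π ^ 3 = π * √π := by rw [pow_succ, sq_sqrt pi_pos.le]
        rw [this, sqrt_mul (by positivity), sqrt_mul (by positivity), sqrt_mul (by positivity)]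
        field_simp

noncomputable def JJ : ℝ≥0∞ := ∫⁻ x : ℝ, ∫⁻ y : ℝ, ENNReal.ofReal (1 / √(((x - 1) ^ 2 + y ^ 2) *
  ((x + 1 / 2) ^ 2 + (y - √3 / 2) ^ 2) * ((x + 1 / 2) ^ 2 + (y + √3 / 2) ^ 2)))

lemma gaussJ (a b c : ℝ) (ha : 0 < a) (hb : 0 < b) (hc : 0 < c) :
    ∫⁻ x : ℝ, ∫⁻ y : ℝ, ENNReal.ofReal (exp (-(a * ((x - 1) ^ 2 + y ^ 2) + b * ((x + 1 / 2) ^ 2 + (y - √3 / 2) ^ 2) +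
      c * ((x + 1 / 2) ^ 2 + (y + √3 / 2) ^ 2))))
      = ENNReal.ofReal (exp (-(3 * (a * b + a * c + b * c) / (a + b + c))) * (π / (a + b + c))) := by
  have h3 : √3 ^ 2 = 3 := sq_sqrt (by norm_num)
  calc _ = ∫⁻ x : ℝ, ∫⁻ y : ℝ, ENNReal.ofReal (exp (-(3 * (a * b + a * c + b * c) / (a + b + c))) * (exp (-((a + b + c) * (x - (a - b / 2 - c / 2) / (a + b + c)) ^ 2)) * exp (-((a + b + c) * (y - (√3 / 2 * (b - c)) / (a + b + c)) ^ 2)))) := by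
        congr 1; ext T; congr 1; ext U; congr 1
        rw [← Real.exp_add, ← Real.exp_add]
        congr 1
        field_simp
        ring_nf
        rw [h3]
        ring
    _ = _ := by
        simp only [ENNReal.ofReal_mul (Real.exp_nonneg _), lintegral_const_mul' _ _ ENNReal.ofReal_ne_top, lgauss _ _ (show 0 < a + b + c by positivity)]
        rw [lintegral_mul_const' _ _ ENNReal.ofReal_ne_top, lgauss _ _ (by positivity), ← ENNReal.ofReal_mul (by positivity)]
        congr 2
        rw [mul_self_sqrt (by positivity)]

lemma JJ_HH : JJ = ENNReal.ofReal (1 / √3) * HH := by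
  unfold JJ
  rw [quad3 (fun x y => (x - 1) ^ 2 + y ^ 2) (fun x y => (x + 1 / 2) ^ 2 + (y - √3 / 2) ^ 2) (fun x y => (x + 1 / 2) ^ 2 + (y + √3 / 2) ^ 2) (by fun_prop) (by fun_prop) (by fun_prop)
    (by
      filter_upwards [measure_eq_zero_iff_ae_notMem.1 (measure_singleton (1:ℝ)), measure_eq_zero_iff_ae_notMem.1 (measure_singleton (-(1/2):ℝ))] with x h1 h2 y
      have h1 : x - 1 ≠ 0 := fun h => h1 (by simp only [mem_singleton_iff]; linarith)
      have h2 : x + 1 / 2 ≠ 0 := fun h => h2 (by simp only [mem_singleton_iff]; linarith)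
      exact ⟨by positivity, by positivity, by positivity⟩)]
  unfold HH
  rw [← lintegral_const_mul' _ _ ENNReal.ofReal_ne_top, ← lintegral_const_mul' _ _ ENNReal.ofReal_ne_top]
  apply lcongr measurableSet_Ioi
  intro X hX
  rw [← lintegral_const_mul' _ _ ENNReal.ofReal_ne_top, ← lintegral_const_mul' _ _ ENNReal.ofReal_ne_top]
  apply lcongr measurableSet_Ioi
  intro Y hY
  have hX : 0 < X := hX
  have hY : 0 < Y := hY
  calc _ = ENNReal.ofReal (1 / √π ^ 3) * ∫⁻ l in Ioi (0:ℝ), ENNReal.ofReal (π / (√X * √Y * (1 + X + Y)) * (1 / √l * exp (-(l * (3 * (X + Y + X * Y) / (1 + X + Y)))))) := by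
        congr 1
        apply lcongr measurableSet_Ioi
        intro l hl
        have hl : 0 < l := hl
        rw [gaussJ (l * X) (l * Y) l (by positivity) (by positivity) hl, ← ENNReal.ofReal_mul (by positivity)]
        congr 1
        rw [show 3 * (l * X * (l * Y) + l * X * l + l * Y * l) / (l * X + l * Y + l) = l * (3 * (X + Y + X * Y) / (1 + X + Y)) by
          rw [show l * X + l * Y + l = l * (1 + X + Y) by ring]; field_simp; ring,
          sqrt_mul hl.le, sqrt_mul hl.le, show l * X + l * Y + l = l * (1 + X + Y) by ring]
        have h := sq_sqrt hl.le
        have h0 := sqrt_pos.2 hl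
        set w := √l
        rw [← h]
        field_simp
    _ = _ := by
        rw [← cmul _ (by positivity), lhalf _ (by positivity), ← ENNReal.ofReal_mul (by positivity), ← ENNReal.ofReal_mul (by positivity), ← ENNReal.ofReal_mul (by positivity)]
        congr 1
        have h1 : √π ^ 3 = π * √π := by rw [pow_succ, sq_sqrt pi_pos.le]
        have h2 := sq_sqrt (show 0 ≤ 1 + X + Y by positivity)
        rw [h1, sqrt_mul (by positivity), sqrt_mul (by positivity), sqrt_mul (by positivity), sqrt_div (by positivity), sqrt_mul (by positivity) (X + Y + X * Y)]
        have h3 := sqrt_pos.2 (show 0 < 1 + X + Y by positivity)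
        set w := √(1 + X + Y)
        rw [← h2]
        field_simp

end ffj

section jval

lemma cos3int (g : ℝ → ℝ≥0∞) (hg : Measurable g) :
    ∫⁻ θ in Ioo (-π) π, g (cos (3 * θ)) = ∫⁻ θ in Ioo (-π) π, g (cos θ) := by
  have hp := pi_pos
  rw [lsym _ _ (by fun_prop) (by intro x; rw [mul_neg, cos_neg]), lsym _ (fun x => g (cos x)) (by fun_prop) (by intro x; rw [cos_neg])]
  congr 1
  have h1 : ∫⁻ φ in Ioo 0 (3 * π), g (cos φ) = 3 * ∫⁻ θ in Ioo 0 π, g (cos (3 * θ)) := by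
    rw [subst1 (φ := fun x => 3 * x) (φ' := fun _ => 3) (s := Ioo 0 π) (t := Ioo 0 (3 * π)) measurableSet_Ioo
      (fun x _ => by simpa using (hasDerivAt_id x).const_mul 3)
      (bij_of_inv (ψ := fun x => x / 3) (by intro x hx; exact ⟨by linarith [hx.1], by linarith [hx.2]⟩)
        (by intro x hx; exact ⟨by linarith [hx.1], by linarith [hx.2]⟩) (by intro x _; ring) (by intro x _; ring)) (fun x => g (cos x)),
      lintegral_const_mul' _ _ ENNReal.ofReal_ne_top]
    norm_num
  have h2 : ∫⁻ φ in Ioo π (2 * π), g (cos φ) = ∫⁻ θ in Ioo 0 π, g (cos θ) := by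
    have a := lshift (-π) (-0) (2 * π) (fun x => g (cos x))
    rw [lneg 0 π] at a
    rw [show -π + 2 * π = π by ring, show -0 + 2 * π = 2 * π by ring] at a
    rw [a]
    congr 1; ext x
    rw [cos_add_two_pi, cos_neg]
  have h3 : ∫⁻ φ in Ioo (2 * π) (3 * π), g (cos φ) = ∫⁻ θ in Ioo 0 π, g (cos θ) := by
    have a := lshift 0 π (2 * π) (fun x => g (cos x))
    rw [show 0 + 2 * π = 2 * π by ring, show π + 2 * π = 3 * π by ring] at a
    rw [a]
    congr 1; ext x
    rw [cos_add_two_pi]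
  rw [lcut (show 0 < 2 * π by positivity) (by linarith), lcut hp (by linarith), h2, h3] at h1
  have : 3 * ∫⁻ θ in Ioo 0 π, g (cos θ) = 3 * ∫⁻ θ in Ioo 0 π, g (cos (3 * θ)) := by
    rw [← h1]; ring
  exact ((ENNReal.mul_right_inj (by norm_num) (by norm_num)).1 this).symm

lemma lcube (f : ℝ → ℝ≥0∞) : ∫⁻ R in Ioi (0:ℝ), f R = ∫⁻ r in Ioi (0:ℝ), ENNReal.ofReal (3 * r ^ 2) * f (r ^ 3) := by
  rw [subst1 (φ := fun r => r ^ 3) (φ' := fun r => 3 * r ^ 2) (s := Ioi 0) (t := Ioi 0) measurableSet_Ioi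
    (fun x _ => by simpa using hasDerivAt_pow 3 x)
    (bij_of_inv (ψ := fun x => x ^ ((1:ℝ) / 3)) (by intro x hx; have hx : 0 < x := hx; simp only [mem_Ioi]; positivity)
      (by intro x hx; have hx : 0 < x := hx; simp only [mem_Ioi]; positivity)
      (by intro x hx; have hx : 0 < x := hx; rw [← rpow_natCast, ← rpow_mul hx.le]; norm_num)
      (by intro x hx; have hx : 0 < x := hx; rw [← rpow_natCast, ← rpow_mul hx.le]; norm_num)) f]
  apply lcongr measurableSet_Ioi
  intro r hr
  rw [abs_of_nonneg (by positivity)]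

noncomputable def WW : ℝ≥0∞ := ∫⁻ x : ℝ, ∫⁻ y : ℝ, ENNReal.ofReal ((x ^ 2 + y ^ 2) ^ (-(2/3) : ℝ) * (1 / √((x - 1) ^ 2 + y ^ 2)))

lemma J1 : 3 * JJ = WW := by
  unfold JJ WW
  rw [lpolar _ (by fun_prop), lpolar _ (by fun_prop), ← lintegral_const_mul' _ _ (by norm_num)]
  conv_rhs => rw [lcube]
  apply lcongr measurableSet_Ioi
  intro r hr
  have hr : 0 < r := hr
  have h3 : √3 ^ 2 = 3 := sq_sqrt (by norm_num)
  calc _ = 3 * ∫⁻ θ in Ioo (-π) π, ENNReal.ofReal (r * (1 / √(r ^ 6 - 2 * r ^ 3 * cos (3 * θ) + 1))) := by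
        congr 1; congr 1; ext θ
        rw [← ENNReal.ofReal_mul hr.le]
        congr 4
        rw [cos_three_mul]
        have hs : sin θ ^ 2 = 1 - cos θ ^ 2 := sin_sq θ
        set c := cos θ
        set s := sin θ
        have e : ((r * c + 1 / 2) ^ 2 + (r * s - √3 / 2) ^ 2) * ((r * c + 1 / 2) ^ 2 + (r * s + √3 / 2) ^ 2)
          = ((r * c + 1 / 2) ^ 2 + r ^ 2 * s ^ 2 + √3 ^ 2 / 4) ^ 2 - r ^ 2 * √3 ^ 2 * s ^ 2 := by ring
        rw [mul_assoc, e, h3, mul_pow r s, hs]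
        ring
    _ = 3 * ∫⁻ θ in Ioo (-π) π, ENNReal.ofReal (r * (1 / √(r ^ 6 - 2 * r ^ 3 * cos θ + 1))) := by
        rw [cos3int (fun c => ENNReal.ofReal (r * (1 / √(r ^ 6 - 2 * r ^ 3 * c + 1)))) (by fun_prop)]
    _ = _ := by
        rw [show (3:ℝ≥0∞) = ENNReal.ofReal 3 by norm_num, cmul _ (by norm_num), ← lintegral_const_mul' _ _ ENNReal.ofReal_ne_top]
        congr 1; ext θ
        have hs : sin θ ^ 2 = 1 - cos θ ^ 2 := sin_sq θ
        rw [← ENNReal.ofReal_mul (by positivity), ← ENNReal.ofReal_mul (by positivity)]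
        congr 1
        rw [show (r ^ 3 * cos θ) ^ 2 + (r ^ 3 * sin θ) ^ 2 = r ^ 6 by rw [mul_pow, mul_pow, hs]; ring,
          show (r ^ 3 * cos θ - 1) ^ 2 + (r ^ 3 * sin θ) ^ 2 = r ^ 6 - 2 * r ^ 3 * cos θ + 1 by rw [mul_pow, hs]; ring,
          show (r ^ 6) ^ (-(2/3) : ℝ) = (r ^ 4)⁻¹ by
            rw [← rpow_natCast, ← rpow_mul hr.le, ← rpow_natCast, ← rpow_neg hr.le]; norm_num]
        field_simp

lemma lgam (p c : ℝ) (hp : 0 < p) (hc : 0 < c) :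
    ENNReal.ofReal (c ^ (-p)) = ENNReal.ofReal (1 / Gamma p) * ∫⁻ x in Ioi (0:ℝ), ENNReal.ofReal (x ^ (p - 1) * exp (-(c * x))) := by
  have := Gamma_pos_of_pos hp
  rw [lgamma p c hp hc, ← ENNReal.ofReal_mul (by positivity)]
  congr 1; field_simp

lemma gaussW (s t : ℝ) (hs : 0 < s) (ht : 0 < t) :
    ∫⁻ x : ℝ, ∫⁻ y : ℝ, ENNReal.ofReal (exp (-(s * (x ^ 2 + y ^ 2) + t * ((x - 1) ^ 2 + y ^ 2))))
      = ENNReal.ofReal (exp (-(s * t / (s + t))) * (π / (s + t))) := by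
  calc _ = ∫⁻ x : ℝ, ∫⁻ y : ℝ, ENNReal.ofReal (exp (-(s * t / (s + t))) * (exp (-((s + t) * (x - t / (s + t)) ^ 2)) * exp (-((s + t) * (y - 0) ^ 2)))) := by
        congr 1; ext T; congr 1; ext U; congr 1
        rw [← Real.exp_add, ← Real.exp_add]
        congr 1
        field_simp
        ring
    _ = _ := by
        simp only [ENNReal.ofReal_mul (Real.exp_nonneg _), lintegral_const_mul' _ _ ENNReal.ofReal_ne_top, lgauss _ _ (show 0 < s + t by positivity)]
        rw [lintegral_mul_const' _ _ ENNReal.ofReal_ne_top, lgauss _ _ (by positivity), ← ENNReal.ofReal_mul (by positivity)]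
        congr 2
        rw [mul_self_sqrt (by positivity)]

lemma lsw22 {μ ν ρ σ : Measure ℝ} [SFinite μ] [SFinite ν] [SFinite ρ] [SFinite σ] (f : ℝ → ℝ → ℝ → ℝ → ℝ≥0∞)
    (hf : Measurable fun p : ℝ × ℝ × ℝ × ℝ => f p.1 p.2.1 p.2.2.1 p.2.2.2) :
    ∫⁻ t, ∫⁻ a, ∫⁻ b, ∫⁻ c, f t a b c ∂σ ∂ρ ∂ν ∂μ
      = ∫⁻ b, ∫⁻ c, ∫⁻ t, ∫⁻ a, f t a b c ∂ν ∂μ ∂σ ∂ρ := by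
  rw [lsw4 f hf]
  exact lsw4 (fun a b c t => f t a b c) (hf.comp (by fun_prop : Measurable fun p : ℝ × ℝ × ℝ × ℝ => (p.2.2.2, p.1, p.2.1, p.2.2.1)))

lemma W1 : ENNReal.ofReal (Gamma (2/3) * √π) * WW = ∫⁻ t in Ioi (0:ℝ), ∫⁻ s in Ioi (0:ℝ),
    ENNReal.ofReal (1 / √t * s ^ (-(1/3) : ℝ) * (exp (-(t * s / (t + s))) * (π / (t + s)))) := by
  have hG := Gamma_pos_of_pos (show (0:ℝ) < 2/3 by norm_num)
  calc _ = ∫⁻ x : ℝ, ∫⁻ y : ℝ, ∫⁻ t in Ioi (0:ℝ), ∫⁻ s in Ioi (0:ℝ),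
        ENNReal.ofReal ((1 / √t * exp (-(t * ((x - 1) ^ 2 + y ^ 2)))) * (s ^ ((2/3 : ℝ) - 1) * exp (-((x ^ 2 + y ^ 2) * s)))) := by
        unfold WW
        rw [← lintegral_const_mul' _ _ ENNReal.ofReal_ne_top]
        apply lintegral_congr_ae
        filter_upwards [measure_eq_zero_iff_ae_notMem.1 (measure_singleton (1:ℝ)), measure_eq_zero_iff_ae_notMem.1 (measure_singleton (0:ℝ))] with x h1 h2
        have h1 : x - 1 ≠ 0 := fun h => h1 (by simp only [mem_singleton_iff]; linarith)
        have h2 : x ≠ 0 := fun h => h2 (by simp only [mem_singleton_iff]; linarith)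
        rw [← lintegral_const_mul' _ _ ENNReal.ofReal_ne_top]
        congr 1; ext y
        rw [← lprod2 measurableSet_Ioi (by fun_prop) (fun t _ => by positivity), lhalf _ (by positivity), lgamma _ _ (by norm_num) (by positivity),
          ← ENNReal.ofReal_mul (by positivity), ← ENNReal.ofReal_mul (by positivity)]
        congr 1
        ring
    _ = ∫⁻ t in Ioi (0:ℝ), ∫⁻ s in Ioi (0:ℝ), ∫⁻ x : ℝ, ∫⁻ y : ℝ,
        ENNReal.ofReal ((1 / √t * exp (-(t * ((x - 1) ^ 2 + y ^ 2)))) * (s ^ ((2/3 : ℝ) - 1) * exp (-((x ^ 2 + y ^ 2) * s)))) :=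
        lsw22 _ (by fun_prop)
    _ = _ := by
        apply lcongr measurableSet_Ioi
        intro t ht
        apply lcongr measurableSet_Ioi
        intro s hs
        have ht : 0 < t := ht
        have hs : 0 < s := hs
        rw [show t * s / (t + s) = s * t / (s + t) by rw [mul_comm, add_comm], add_comm t s, ENNReal.ofReal_mul (by positivity), ← gaussW s t hs ht,
          ← lintegral_const_mul' _ _ ENNReal.ofReal_ne_top]
        congr 1; ext x
        rw [cmul _ (by positivity)]
        congr 1; ext y
        congr 1
        rw [neg_add, Real.exp_add, show (2/3:ℝ) - 1 = -(1/3) by norm_num, mul_comm s (x ^ 2 + y ^ 2)]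
        ring

lemma W2 : ∫⁻ t in Ioi (0:ℝ), ∫⁻ s in Ioi (0:ℝ),
    ENNReal.ofReal (1 / √t * s ^ (-(1/3) : ℝ) * (exp (-(t * s / (t + s))) * (π / (t + s))))
    = ENNReal.ofReal (π * Gamma (1/6)) * ∫⁻ X in Ioi (0:ℝ), ENNReal.ofReal (1 / √X * (1 + X) ^ (-(5/6) : ℝ)) := by
  calc _ = ∫⁻ t in Ioi (0:ℝ), ∫⁻ X in Ioi (0:ℝ), ENNReal.ofReal (π * X ^ (-(1/3) : ℝ) / (1 + X) * (t ^ ((1/6:ℝ) - 1) * exp (-(X / (1 + X) * t)))) := by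
        apply lcongr measurableSet_Ioi
        intro t ht
        have ht : 0 < t := ht
        rw [lscale_pos t ht, ← lintegral_const_mul' _ _ ENNReal.ofReal_ne_top]
        apply lcongr measurableSet_Ioi
        intro X hX
        have hX : 0 < X := hX
        rw [← ENNReal.ofReal_mul (by positivity)]
        congr 1
        rw [show t * (t * X) / (t + t * X) = X / (1 + X) * t by field_simp, mul_rpow ht.le hX.le,
          show t + t * X = t * (1 + X) by ring,
          show t ^ ((1/6:ℝ) - 1) = t ^ (-(1/3):ℝ) * (√t)⁻¹ by
            rw [sqrt_eq_rpow, ← rpow_neg ht.le, ← rpow_add ht]; norm_num]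
        field_simp
    _ = ∫⁻ X in Ioi (0:ℝ), ∫⁻ t in Ioi (0:ℝ), ENNReal.ofReal (π * X ^ (-(1/3) : ℝ) / (1 + X) * (t ^ ((1/6:ℝ) - 1) * exp (-(X / (1 + X) * t)))) :=
        lsw2 _ (by fun_prop)
    _ = _ := by
        have hG := Gamma_pos_of_pos (show (0:ℝ) < 1/6 by norm_num)
        rw [cmul _ (by positivity)]
        apply lcongr measurableSet_Ioi
        intro X hX
        have hX : 0 < X := hX
        rw [← cmul _ (by positivity), lgamma _ _ (by norm_num) (by positivity), ← ENNReal.ofReal_mul (by positivity)]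
        congr 1
        have h1 : 0 < 1 + X := by positivity
        rw [div_rpow hX.le h1.le, sqrt_eq_rpow, one_div (X ^ (1/2:ℝ)), ← rpow_neg hX.le,
          show X ^ (-(1/2):ℝ) = X ^ (-(1/3):ℝ) * X ^ (-(1/6):ℝ) by rw [← rpow_add hX]; norm_num,
          show (1 + X) ^ (-(5/6):ℝ) = (1 + X) ^ (-1:ℝ) * (1 + X) ^ (1/6:ℝ) by rw [← rpow_add h1]; norm_num,
          rpow_neg h1.le (1/6), rpow_neg_one]
        field_simp

lemma W3 : ∫⁻ X in Ioi (0:ℝ), ENNReal.ofReal (1 / √X * (1 + X) ^ (-(5/6) : ℝ)) = ENNReal.ofReal (√π * Gamma (1/3) / Gamma (5/6)) := by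
  have hG := Gamma_pos_of_pos (show (0:ℝ) < 5/6 by norm_num)
  have hG3 := Gamma_pos_of_pos (show (0:ℝ) < 1/3 by norm_num)
  calc _ = ∫⁻ X in Ioi (0:ℝ), ∫⁻ u in Ioi (0:ℝ), ENNReal.ofReal (1 / Gamma (5/6) * (u ^ ((5/6:ℝ) - 1) * exp (-u)) * (1 / √X * exp (-(X * u)))) := by
        apply lcongr measurableSet_Ioi
        intro X hX
        have hX : 0 < X := hX
        rw [ENNReal.ofReal_mul (by positivity), lgam _ _ (by norm_num) (by positivity), cmul _ (by positivity), cmul _ (by positivity)]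
        congr 1; ext u; congr 1
        rw [show -((1 + X) * u) = -u + -(X * u) by ring, Real.exp_add]
        ring
    _ = ∫⁻ u in Ioi (0:ℝ), ∫⁻ X in Ioi (0:ℝ), ENNReal.ofReal (1 / Gamma (5/6) * (u ^ ((5/6:ℝ) - 1) * exp (-u)) * (1 / √X * exp (-(X * u)))) :=
        lsw2 _ (by fun_prop)
    _ = ∫⁻ u in Ioi (0:ℝ), ENNReal.ofReal (√π / Gamma (5/6) * (u ^ ((1/3:ℝ) - 1) * exp (-(1 * u)))) := by
        apply lcongr measurableSet_Ioi
        intro u hu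
        have hu : 0 < u := hu
        rw [← cmul _ (by positivity), lhalf _ hu, ← ENNReal.ofReal_mul (by positivity)]
        congr 1
        rw [show u ^ ((1/3:ℝ) - 1) = u ^ ((5/6:ℝ) - 1) * (√u)⁻¹ by
            rw [sqrt_eq_rpow, ← rpow_neg hu.le, ← rpow_add hu]; norm_num, one_mul]
        field_simp
    _ = _ := by
        rw [← cmul _ (by positivity), lgamma _ _ (by norm_num) (by norm_num), ← ENNReal.ofReal_mul (by positivity)]
        congr 1
        simp
        ring

lemma W4 : WW = ENNReal.ofReal (π * Gamma (1/6) * Gamma (1/3) / (Gamma (2/3) * Gamma (5/6))) := by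
  have h1 := Gamma_pos_of_pos (show (0:ℝ) < 5/6 by norm_num)
  have h2 := Gamma_pos_of_pos (show (0:ℝ) < 1/3 by norm_num)
  have h3 := Gamma_pos_of_pos (show (0:ℝ) < 2/3 by norm_num)
  have h4 := Gamma_pos_of_pos (show (0:ℝ) < 1/6 by norm_num)
  have h := W1
  rw [W2, W3, ← ENNReal.ofReal_mul (by positivity)] at h
  rw [← ENNReal.mul_right_inj (a := ENNReal.ofReal (Gamma (2/3) * √π)) (by
    rw [Ne, ENNReal.ofReal_eq_zero, not_le]; positivity) ENNReal.ofReal_ne_top, h, ← ENNReal.ofReal_mul (by positivity)]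
  congr 1
  field_simp

lemma gamma_rel : π * Gamma (1/6) * Gamma (1/3) / (Gamma (2/3) * Gamma (5/6)) = 3 * √3 * Gamma (1/3) ^ 6 / (2 ^ (8/3:ℝ) * π ^ 2) := by
  have h1 := Gamma_pos_of_pos (show (0:ℝ) < 5/6 by norm_num)
  have h2 := Gamma_pos_of_pos (show (0:ℝ) < 1/3 by norm_num)
  have h3 := Gamma_pos_of_pos (show (0:ℝ) < 2/3 by norm_num)
  have h4 := Gamma_pos_of_pos (show (0:ℝ) < 1/6 by norm_num)
  have s3 : √3 ^ 2 = 3 := sq_sqrt (by norm_num)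
  have s30 : 0 < √3 := by positivity
  have r1 := Real.Gamma_mul_Gamma_one_sub (1/3)
  have r2 := Real.Gamma_mul_Gamma_one_sub (1/6)
  have r3 := Real.Gamma_mul_Gamma_add_half (1/6)
  rw [show (1:ℝ) - 1/3 = 2/3 by norm_num, show π * (1/3) = π / 3 by ring, sin_pi_div_three] at r1
  rw [show (1:ℝ) - 1/6 = 5/6 by norm_num, show π * (1/6) = π / 6 by ring, sin_pi_div_six] at r2
  rw [show (1/6:ℝ) + 1/2 = 2/3 by norm_num, show (2:ℝ) * (1/6) = 1/3 by norm_num, show (1:ℝ) - 1/3 = 2/3 by norm_num] at r3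
  have e8 : (2:ℝ) ^ (8/3:ℝ) = 2 ^ (2/3:ℝ) * 4 := by
    rw [show (8/3:ℝ) = 2/3 + 2 by norm_num, rpow_add (by norm_num)]; norm_num
  have e4 : ((2:ℝ) ^ (2/3:ℝ)) ^ 3 = 4 := by
    rw [← rpow_natCast, ← rpow_mul (by norm_num)]; norm_num
  have k1 : Gamma (2/3) = 2 * π / (√3 * Gamma (1/3)) := by
    field_simp at r1 ⊢; linarith
  have k3 : Gamma (1/6) = Gamma (1/3) * 2 ^ (2/3:ℝ) * √π / Gamma (2/3) := by
    field_simp; linarith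
  have k2 : Gamma (5/6) = 2 * π / Gamma (1/6) := by
    field_simp at r2 ⊢; linarith
  have spi : √π ^ 2 = π := sq_sqrt pi_pos.le
  have spi0 : 0 < √π := by positivity
  rw [e8, k2, k3, k1]
  have hc : 0 < (2:ℝ) ^ (2/3:ℝ) := by positivity
  set c := (2:ℝ) ^ (2/3:ℝ)
  set g := Gamma (1/3)
  set q := √3
  rw [← spi]
  set p := √π
  field_simp
  rw [e4, s3, sqrt_sq spi0.le]
  ring

end jval

lemma HH_val : HH = ENNReal.ofReal (3 * Gamma (1/3) ^ 6 / (2 ^ (8/3:ℝ) * π ^ 2)) := by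
  have hg := Gamma_pos_of_pos (show (0:ℝ) < 1/3 by norm_num)
  have h := J1
  rw [W4, gamma_rel, JJ_HH, ← mul_assoc, show (3:ℝ≥0∞) = ENNReal.ofReal 3 by norm_num, ← ENNReal.ofReal_mul (by norm_num)] at h
  rw [← ENNReal.mul_right_inj (a := ENNReal.ofReal (3 * (1 / √3))) (by
    rw [Ne, ENNReal.ofReal_eq_zero, not_le]; positivity) ENNReal.ofReal_ne_top, h, ← ENNReal.ofReal_mul (by positivity)]
  congr 1
  have s3 : √3 ^ 2 = 3 := sq_sqrt (by norm_num)
  field_simp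
  linarith

lemma pow203 : (2:ℝ) ^ ((20:ℝ)/3) = 16 * 2 ^ (8/3:ℝ) := by
  rw [show (20/3:ℝ) = 4 + 8/3 by norm_num, rpow_add (by norm_num)]; norm_num

lemma A_val : ∫ t in Ioi (0:ℝ), I0 (2*t) * I0 t * (K0 t)^3 * t = 3 * Gamma (1/3) ^ 6 / (2 ^ ((20:ℝ)/3) * π ^ 2) := by
  have hg := Gamma_pos_of_pos (show (0:ℝ) < 1/3 by norm_num)
  have hI := I0_meas
  have hK := K0_meas
  rw [integral_eq_lintegral_of_nonneg_ae (by
    filter_upwards [ae_restrict_mem measurableSet_Ioi] with t ht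
    have ht : 0 < t := ht
    have h1 := I0_nonneg (2 * t)
    have h2 := I0_nonneg t
    have h3 := K0_nonneg t
    simp only [Pi.zero_apply]
    positivity) (by
    apply Measurable.aestronglyMeasurable
    have := hI.comp (measurable_const_mul (2:ℝ))
    simp only [Function.comp_def] at this
    fun_prop)]
  have h := A3
  rw [FF_HH, HH_val] at h
  have h2 : ∫⁻ t in Ioi (0:ℝ), ENNReal.ofReal (I0 (2*t) * I0 t * (K0 t)^3 * t) = ENNReal.ofReal (3 * Gamma (1/3) ^ 6 / (2 ^ ((20:ℝ)/3) * π ^ 2)) := by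
    rw [← ENNReal.mul_right_inj (a := 16) (by norm_num) (by norm_num), h, show (16:ℝ≥0∞) = ENNReal.ofReal 16 by norm_num, ← ENNReal.ofReal_mul (by positivity), pow203]
    congr 1
    field_simp
  rw [h2, ENNReal.toReal_ofReal (by positivity)]

lemma B_val : ∫ t in Ioi (0:ℝ), K0 (2*t) * (I0 t)^2 * (K0 t)^2 * t = Gamma (1/3) ^ 6 / (2 ^ ((20:ℝ)/3) * π ^ 2) := by
  have hg := Gamma_pos_of_pos (show (0:ℝ) < 1/3 by norm_num)
  have hI := I0_meas
  have hK := K0_meas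
  rw [integral_eq_lintegral_of_nonneg_ae (by
    filter_upwards [ae_restrict_mem measurableSet_Ioi] with t ht
    have ht : 0 < t := ht
    have h1 := K0_nonneg (2 * t)
    simp only [Pi.zero_apply]
    positivity) (by
    apply Measurable.aestronglyMeasurable
    have := hK.comp (measurable_const_mul (2:ℝ))
    simp only [Function.comp_def] at this
    fun_prop)]
  have h := FF_LL
  rw [FF_HH, HH_val, ← B6, ← mul_assoc] at h
  have h2 : BB = ENNReal.ofReal (Gamma (1/3) ^ 6 / (2 ^ ((20:ℝ)/3) * π ^ 2)) := by
    rw [← ENNReal.mul_right_inj (a := 8 * 6) (by norm_num) (ENNReal.mul_ne_top (by norm_num) (by norm_num)), ← h, show (8 * 6:ℝ≥0∞) = ENNReal.ofReal 48 by norm_num, ← ENNReal.ofReal_mul (by positivity), pow203]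
    congr 1
    field_simp
    norm_num
  unfold BB at h2
  rw [h2, ENNReal.toReal_ofReal (by positivity)]

theorem broadhurst_2008_identity :
    (∫ t in Ioi (0:ℝ), I0 (2*t) * I0 t * (K0 t)^3 * t)
      = 3 * ∫ t in Ioi (0:ℝ), K0 (2*t) * (I0 t)^2 * (K0 t)^2 * t ∧
    (∫ t in Ioi (0:ℝ), I0 (2*t) * I0 t * (K0 t)^3 * t)
      = (3 * π / (2 : ℝ) ^ ((20:ℝ)/3)) * (Gamma (1/3) / Real.sqrt π)^6 ∧
    (∫ t in Ioi (0:ℝ), K0 (2*t) * (I0 t)^2 * (K0 t)^2 * t)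
      = (π / (2 : ℝ) ^ ((20:ℝ)/3)) * (Gamma (1/3) / Real.sqrt π)^6 := by
  have h6 : (Gamma (1/3) / Real.sqrt π)^6 = Gamma (1/3) ^ 6 / π ^ 3 := by
    rw [div_pow, show √π ^ 6 = (√π ^ 2) ^ 3 by ring, sq_sqrt pi_pos.le]
  have hp := pi_pos
  rw [A_val, B_val, h6]
  refine ⟨by ring, by field_simp, by field_simp⟩
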